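/- Let m, r be positive integers with 2 ≤ r ≤ m/100, and let M = ⌈(2^{3r-2}(r-1)^{2r-1}/r!)^{1/(r-1)} · m · (m(r-1)+r)^{1/(r-1)}⌉. For any constant 0 < c < 1, if q is a squarefree positive integer with φ(q) ≥ ⌈M/⌊c(m-1)/(r-1)⌋⌉, then there are at least 2(1-c)m · (⌈M/⌊c(m-1)/(r-1)⌋⌉)^{-5} · φ(q)(φ(q)-1) many m-tuples a ∈ ((ℤ/qℤ)^×)^m such that π(x;q,a) → ∞ as x → ∞. -/

import Mathlib

open Filter

/-- `π(x; q, a)`: the number of indices `n` with `p_n ≤ x` such that the `m` consecutive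
primes `p_n, p_{n+1}, …, p_{n+m-1}` satisfy `p_{n+i} ≡ a_i (mod q)` for all `i`. -/
noncomputable def consecCount (q m : ℕ) (a : Fin m → (ZMod q)ˣ) (x : ℝ) : ℕ :=
  Set.ncard {n : ℕ | (Nat.nth Nat.Prime n : ℝ) ≤ x ∧
    ∀ i : Fin m, ((Nat.nth Nat.Prime (n + (i : ℕ)) : ℕ) : ZMod q) = (a i : ZMod q)}

/-- The quantity `M = ⌈(2^(3r-2) (r-1)^(2r-1) / r!)^(1/(r-1)) · m · (m(r-1)+r)^(1/(r-1))⌉`. -/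
noncomputable def Mval (m r : ℕ) : ℕ :=
  ⌈((2 : ℝ) ^ (3 * r - 2) * ((r : ℝ) - 1) ^ (2 * r - 1) / (r.factorial : ℝ)) ^
        ((1 : ℝ) / ((r : ℝ) - 1)) *
      (m : ℝ) * ((m : ℝ) * ((r : ℝ) - 1) + (r : ℝ)) ^ ((1 : ℝ) / ((r : ℝ) - 1))⌉₊

/-- `K = ⌈M / ⌊c(m-1)/(r-1)⌋⌉`. -/
noncomputable def Kval (m r : ℕ) (c : ℝ) : ℕ :=
  ⌈(Mval m r : ℝ) / (⌊c * ((m : ℝ) - 1) / ((r : ℝ) - 1)⌋₊ : ℝ)⌉₊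

/-!
Fix `k = r - 1` and let `𝒜` be the set of residue patterns modulo `q` of `k + 1` consecutive primes
that occur infinitely often; beyond some point every pattern lies in `𝒜`. By Chebyshev's bound and
a telescoping sum, a positive proportion of the primes `p_n ≤ x` satisfy `p_{n+k} - p_n ≤ H` with
`H` of order `log x`. Conversely, Selberg's upper bound sieve limits how often a given pattern can
be met by such short clusters: refine it to a pattern modulo `W = q ∏_{p ≤ w} p`, and for each
choice of the at most `(H / W) ^ k / k!` possible clusters of offsets count the translates
consisting of primes. The refinement to `W` makes the singular series harmless, and summing over the
lifts of the patterns bounds the number of clusters by `#𝒜` times a constant multiple of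
`x / (φ(q) ^ (k + 1) log x)`. Comparing both counts gives `φ(q) ^ (k + 1) ≪ #𝒜`, with an implied
constant small enough to be absorbed by the powers of `K ≤ φ(q)`.
-/

section PeriodicSums

open Finset

variable {ι R : Type*}

lemma sum_range_mul_of_periodic [CommSemiring R] {a b : ℕ} (hab : a.Coprime b) {u v : ℕ → R}
    (hu : Function.Periodic u a) (hv : Function.Periodic v b) :
    ∑ t ∈ range (a * b), u t * v t = (∑ t ∈ range a, u t) * ∑ t ∈ range b, v t := by
  have hinj : Set.InjOn (fun t ↦ (t % a, t % b)) (range (a * b)) := by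
    intro s hs t ht hst
    rw [mem_coe, mem_range] at hs ht
    exact ((Nat.modEq_and_modEq_iff_modEq_mul hab).1 (Prod.mk.inj hst)).eq_of_lt_of_lt hs ht
  have himage : (range (a * b)).image (fun t ↦ (t % a, t % b)) = range a ×ˢ range b := by
    refine eq_of_subset_of_card_le (image_subset_iff.2 fun t ht ↦ ?_) ?_
    · have hpos : 0 < a * b := pos_of_gt (mem_range.1 ht)
      exact mem_product.2 ⟨mem_range.2 (t.mod_lt (pos_of_mul_pos_left hpos b.zero_le)),
        mem_range.2 (t.mod_lt (pos_of_mul_pos_right hpos a.zero_le))⟩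
    · rw [card_image_of_injOn hinj, card_product, card_range, card_range, card_range]
  rw [sum_mul_sum, ← sum_product', ← himage, sum_image hinj]
  exact sum_congr rfl fun t _ ↦ by rw [hu.map_mod_nat, hv.map_mod_nat]

lemma periodic_prod_of_periodic [CommMonoid R] {S : Finset ι} {n : ι → ℕ} {g : ι → ℕ → R}
    (hg : ∀ i ∈ S, Function.Periodic (g i) (n i)) :
    Function.Periodic (fun t ↦ ∏ i ∈ S, g i t) (∏ i ∈ S, n i) := by
  intro t
  refine prod_congr rfl fun i hi ↦ ?_
  obtain ⟨d, hd⟩ := dvd_prod_of_mem n hi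
  rw [hd, mul_comm]
  exact (hg i hi).nat_mul d t

lemma sum_range_prod_of_periodic [CommSemiring R] {S : Finset ι} {n : ι → ℕ}
    (hn : (S : Set ι).Pairwise fun i j ↦ (n i).Coprime (n j)) {g : ι → ℕ → R}
    (hg : ∀ i ∈ S, Function.Periodic (g i) (n i)) :
    ∑ t ∈ range (∏ i ∈ S, n i), ∏ i ∈ S, g i t = ∏ i ∈ S, ∑ t ∈ range (n i), g i t := by
  classical
  induction S using Finset.induction_on with
  | empty => simp
  | insert a S ha ih =>
    have hS : ∀ i ∈ S, i ∈ insert a S := fun i ↦ mem_insert_of_mem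
    simp_rw [prod_insert ha]
    rw [← ih (hn.mono (coe_subset.2 hS)) fun i hi ↦ hg i (hS i hi)]
    refine sum_range_mul_of_periodic (Nat.Coprime.prod_right fun i hi ↦ ?_)
      (hg a (mem_insert_self a S)) (periodic_prod_of_periodic fun i hi ↦ hg i (hS i hi))
    exact hn (mem_coe.2 (mem_insert_self a S)) (mem_coe.2 (hS i hi))
      (ne_of_mem_of_not_mem hi ha).symm

lemma sum_range_mul_add_of_periodic [AddCommMonoid R] {u : ℕ → R} {Q : ℕ}
    (hu : Function.Periodic u Q) (a b : ℕ) :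
    ∑ t ∈ range (Q * a + b), u t = a • ∑ t ∈ range Q, u t + ∑ t ∈ range b, u t := by
  induction a with
  | zero => simp
  | succ a ih =>
    have hshift : ∀ t, u (Q + t) = u t := fun t ↦ by rw [add_comm, hu t]
    rw [show Q * (a + 1) + b = Q + (Q * a + b) by ring, sum_range_add]
    simp_rw [hshift]
    rw [ih, succ_nsmul', add_assoc]

lemma sum_range_le_of_periodic {u : ℕ → ℝ} {Q : ℕ} (hQ : 0 < Q) (hu : Function.Periodic u Q)
    {C : ℝ} (hC : ∀ t, |u t| ≤ C) (hnonneg : 0 ≤ ∑ t ∈ range Q, u t) (X : ℕ) :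
    ∑ t ∈ range X, u t ≤ X * ((∑ t ∈ range Q, u t) / Q) + Q * C := by
  have hC0 : 0 ≤ C := (abs_nonneg _).trans (hC 0)
  have hperiods : (X / Q : ℕ) • ∑ t ∈ range Q, u t ≤ X * ((∑ t ∈ range Q, u t) / Q) := by
    rw [nsmul_eq_mul, mul_div_left_comm, mul_comm]
    gcongr
    exact Nat.cast_div_le
  have hrest : ∑ t ∈ range (X % Q), u t ≤ Q * C :=
    calc ∑ t ∈ range (X % Q), u t
        ≤ ∑ _t ∈ range (X % Q), C := sum_le_sum fun t _ ↦ (le_abs_self _).trans (hC t)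
      _ = (X % Q : ℕ) * C := by simp
      _ ≤ Q * C := by gcongr; exact (X.mod_lt hQ).le
  calc ∑ t ∈ range X, u t = ∑ t ∈ range (Q * (X / Q) + X % Q), u t := by rw [Nat.div_add_mod]
    _ = (X / Q : ℕ) • ∑ t ∈ range Q, u t + ∑ t ∈ range (X % Q), u t :=
        sum_range_mul_add_of_periodic hu _ _
    _ ≤ X * ((∑ t ∈ range Q, u t) / Q) + Q * C := add_le_add hperiods hrest

end PeriodicSums

section SelbergSieve

open Finset

/-- The multiplicative weight `∏ p ∈ S, ω p / (p - ω p)` of Selberg's sieve. A squarefree modulus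
is encoded by the finite set `S` of its prime factors, and `ω p` is the number of residue classes
removed modulo `p`. -/
noncomputable def selbergWeight (ω : ℕ → ℝ) (S : Finset ℕ) : ℝ :=
  ∏ p ∈ S, ω p / (p - ω p)

/-- The index set of Selberg's sieve: the moduli of size at most `z` composed of elements
of `P`. -/
def sieveModuli (P : Finset ℕ) (z : ℕ) : Finset (Finset ℕ) :=
  {S ∈ P.powerset | ∏ p ∈ S, p ≤ z}

/-- The denominator in the main term of Selberg's upper bound sieve of level `z`. -/
noncomputable def selbergSum (ω : ℕ → ℝ) (P : Finset ℕ) (z : ℕ) : ℝ :=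
  ∑ S ∈ sieveModuli P z, selbergWeight ω S

lemma mem_sieveModuli {P S : Finset ℕ} {z : ℕ} :
    S ∈ sieveModuli P z ↔ S ⊆ P ∧ ∏ p ∈ S, p ≤ z := by
  rw [sieveModuli, mem_filter, mem_powerset]

lemma union_mem_sieveModuli {P : Finset ℕ} (hP : ∀ p ∈ P, 0 < p) {z y : ℕ} {S T : Finset ℕ}
    (hS : S ∈ sieveModuli P z) (hT : T ∈ sieveModuli P y) : S ∪ T ∈ sieveModuli P (z * y) := by
  rw [mem_sieveModuli] at *
  refine ⟨union_subset hS.1 hT.1, ?_⟩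
  calc ∏ p ∈ S ∪ T, p ≤ (∏ p ∈ S ∪ T, p) * ∏ p ∈ S ∩ T, p :=
        Nat.le_mul_of_pos_right _ <| prod_pos fun p hp ↦ hP p (hS.1 (inter_subset_left hp))
    _ = (∏ p ∈ S, p) * ∏ p ∈ T, p := prod_union_inter
    _ ≤ z * y := Nat.mul_le_mul hS.2 hT.2

lemma selbergWeight_pos {ω : ℕ → ℝ} {S : Finset ℕ} (hpos : ∀ p ∈ S, 0 < ω p)
    (hlt : ∀ p ∈ S, ω p < p) : 0 < selbergWeight ω S :=
  prod_pos fun p hp ↦ div_pos (hpos p hp) (sub_pos.2 (hlt p hp))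

lemma selbergSum_pos {ω : ℕ → ℝ} {P : Finset ℕ} (hpos : ∀ p ∈ P, 0 < ω p)
    (hlt : ∀ p ∈ P, ω p < p) {z : ℕ} (hz : 1 ≤ z) : 0 < selbergSum ω P z :=
  sum_pos (fun S hS ↦ have hSP := (mem_sieveModuli.1 hS).1
    selbergWeight_pos (fun p hp ↦ hpos p (hSP hp)) fun p hp ↦ hlt p (hSP hp))
    ⟨∅, mem_sieveModuli.2 ⟨empty_subset P, by simpa using hz⟩⟩

variable {P : Finset ℕ} {B : ℕ → ℕ → Prop} [∀ p, DecidablePred (B p)] {ω : ℕ → ℝ}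

/-- A sieving problem: for each `p` in the set `P` of pairwise coprime moduli, the integers `t`
with `B p t` make up `ω p` residue classes modulo `p`, at least one and not all of them. -/
structure IsResidueSieve (P : Finset ℕ) (B : ℕ → ℕ → Prop) [∀ p, DecidablePred (B p)]
    (ω : ℕ → ℝ) : Prop where
  coprime : (P : Set ℕ).Pairwise Nat.Coprime
  periodic : ∀ p ∈ P, Function.Periodic (B p) p
  card_eq : ∀ p ∈ P, (#{t ∈ range p | B p t} : ℝ) = ω p
  one_le : ∀ p ∈ P, 1 ≤ ω p
  lt : ∀ p ∈ P, ω p < p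

/-- The mean-zero function modulo `p` that equals `1` off the removed residue classes. -/
noncomputable def sieveFactor (B : ℕ → ℕ → Prop) [∀ p, DecidablePred (B p)] (ω : ℕ → ℝ)
    (p t : ℕ) : ℝ :=
  if B p t then 1 - p / ω p else 1

/-- The orthogonal functions, indexed by squarefree moduli, in which Selberg's quadratic form is
diagonal. -/
noncomputable def sieveProduct (B : ℕ → ℕ → Prop) [∀ p, DecidablePred (B p)] (ω : ℕ → ℝ)
    (S : Finset ℕ) (t : ℕ) : ℝ :=
  ∏ p ∈ S, sieveFactor B ω p t

lemma sieveProduct_eq_one {S : Finset ℕ} {t : ℕ} (ht : ∀ p ∈ S, ¬ B p t) :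
    sieveProduct B ω S t = 1 :=
  prod_eq_one fun p hp ↦ if_neg (ht p hp)

lemma sieveProduct_mul_sieveProduct (S S' : Finset ℕ) (t : ℕ) :
    sieveProduct B ω S t * sieveProduct B ω S' t =
      ∏ p ∈ S ∪ S', (if p ∈ S then sieveFactor B ω p t else 1) *
        (if p ∈ S' then sieveFactor B ω p t else 1) := by
  rw [prod_mul_distrib, prod_ite_mem, prod_ite_mem, union_inter_cancel_left,
    union_inter_cancel_right, sieveProduct, sieveProduct]

namespace IsResidueSieve

lemma pos (h : IsResidueSieve P B ω) {p : ℕ} (hp : p ∈ P) : 0 < ω p :=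
  one_pos.trans_le (h.one_le p hp)

lemma cast_pos (h : IsResidueSieve P B ω) {p : ℕ} (hp : p ∈ P) : (0 : ℝ) < p :=
  (h.pos hp).trans (h.lt p hp)

lemma weight_pos (h : IsResidueSieve P B ω) {S : Finset ℕ} (hS : S ⊆ P) :
    0 < selbergWeight ω S :=
  selbergWeight_pos (fun _ hp ↦ h.pos (hS hp)) fun p hp ↦ h.lt p (hS hp)

lemma periodic_sieveFactor (h : IsResidueSieve P B ω) {p : ℕ} (hp : p ∈ P) :
    Function.Periodic (sieveFactor B ω p) p :=
  fun t ↦ by simp only [sieveFactor, h.periodic p hp t]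

lemma card_not_removed (h : IsResidueSieve P B ω) {p : ℕ} (hp : p ∈ P) :
    (#{t ∈ range p | ¬ B p t} : ℝ) = p - ω p := by
  rw [eq_sub_iff_add_eq', ← h.card_eq p hp]
  exact_mod_cast (card_filter_add_card_filter_not (s := range p) (B p)).trans (card_range p)

lemma sum_sieveFactor (h : IsResidueSieve P B ω) {p : ℕ} (hp : p ∈ P) :
    ∑ t ∈ range p, sieveFactor B ω p t = 0 := by
  have hω := (h.pos hp).ne'
  simp only [sieveFactor, sum_ite, sum_const, nsmul_eq_mul, h.card_eq p hp, h.card_not_removed hp]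
  field_simp
  ring

lemma sum_sieveFactor_sq (h : IsResidueSieve P B ω) {p : ℕ} (hp : p ∈ P) :
    ∑ t ∈ range p, sieveFactor B ω p t ^ 2 = p * ((p - ω p) / ω p) := by
  have hω := (h.pos hp).ne'
  simp only [sieveFactor, ite_pow, sum_ite, sum_const, nsmul_eq_mul, h.card_eq p hp,
    h.card_not_removed hp]
  field_simp
  ring

lemma abs_sieveFactor_le (h : IsResidueSieve P B ω) {p : ℕ} (hp : p ∈ P) (t : ℕ) :
    |sieveFactor B ω p t| ≤ p := by
  have hω := h.one_le p hp
  have hp1 : (1 : ℝ) ≤ p := hω.trans (h.lt p hp).le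
  rw [sieveFactor]
  split_ifs
  · have h0 : 0 ≤ (p : ℝ) / ω p := div_nonneg p.cast_nonneg (h.pos hp).le
    have hle : (p : ℝ) / ω p ≤ p := div_le_self p.cast_nonneg hω
    exact abs_le.2 ⟨by linarith, by linarith⟩
  · rwa [abs_one]

lemma abs_sieveProduct_le (h : IsResidueSieve P B ω) {z : ℕ} {S : Finset ℕ}
    (hS : S ∈ sieveModuli P z) (t : ℕ) : |sieveProduct B ω S t| ≤ z := by
  obtain ⟨hSP, hSz⟩ := mem_sieveModuli.1 hS
  calc |sieveProduct B ω S t| = ∏ p ∈ S, |sieveFactor B ω p t| := abs_prod S _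
    _ ≤ ∏ p ∈ S, (p : ℝ) :=
        prod_le_prod (fun _ _ ↦ abs_nonneg _) fun p hp ↦ h.abs_sieveFactor_le (hSP hp) t
    _ ≤ z := by rw [← Nat.cast_prod]; exact_mod_cast hSz

lemma periodic_sieveProduct_mul (h : IsResidueSieve P B ω) {S S' : Finset ℕ} (hS : S ⊆ P)
    (hS' : S' ⊆ P) :
    Function.Periodic (fun t ↦ sieveProduct B ω S t * sieveProduct B ω S' t)
      (∏ p ∈ S ∪ S', p) := by
  simp_rw [sieveProduct_mul_sieveProduct]
  exact periodic_prod_of_periodic fun p hp t ↦ by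
    simp only [h.periodic_sieveFactor (union_subset hS hS' hp) t]

lemma sum_sieveProduct_mul (h : IsResidueSieve P B ω) {S S' : Finset ℕ} (hS : S ⊆ P)
    (hS' : S' ⊆ P) :
    ∑ t ∈ range (∏ p ∈ S ∪ S', p), sieveProduct B ω S t * sieveProduct B ω S' t =
      if S = S' then ((∏ p ∈ S ∪ S', p : ℕ) : ℝ) * (selbergWeight ω S)⁻¹ else 0 := by
  have hP : S ∪ S' ⊆ P := union_subset hS hS'
  simp_rw [sieveProduct_mul_sieveProduct]
  rw [sum_range_prod_of_periodic (h.coprime.mono (coe_subset.2 hP)) fun p hp t ↦ by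
    simp only [h.periodic_sieveFactor (hP hp) t]]
  split_ifs with hSS'
  · subst hSS'
    rw [union_self, selbergWeight, ← prod_inv_distrib, Nat.cast_prod, ← prod_mul_distrib]
    refine prod_congr rfl fun p hp ↦ ?_
    simp only [hp, if_true, ← pow_two, inv_div, h.sum_sieveFactor_sq (hS hp)]
  · obtain ⟨p, hp⟩ : (symmDiff S S').Nonempty :=
      nonempty_iff_ne_empty.2 fun h0 ↦ hSS' (symmDiff_eq_bot.1 h0)
    rcases mem_symmDiff.1 hp with ⟨hmem, hnot⟩ | ⟨hmem, hnot⟩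
    · refine prod_eq_zero (mem_union_left S' hmem) ?_
      simp only [hmem, hnot, if_true, if_false, mul_one, h.sum_sieveFactor (hS hmem)]
    · refine prod_eq_zero (mem_union_right S hmem) ?_
      simp only [hmem, hnot, if_true, if_false, one_mul, h.sum_sieveFactor (hS' hmem)]

lemma sum_range_sieveProduct_mul_le (h : IsResidueSieve P B ω) {z : ℕ} {S S' : Finset ℕ}
    (hS : S ∈ sieveModuli P z) (hS' : S' ∈ sieveModuli P z) (X : ℕ) :
    ∑ t ∈ range X, sieveProduct B ω S t * sieveProduct B ω S' t ≤
      (if S = S' then X * (selbergWeight ω S)⁻¹ else 0) + (z : ℝ) ^ 4 := by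
  have hSP := (mem_sieveModuli.1 hS).1
  have hSP' := (mem_sieveModuli.1 hS').1
  have hperiod := h.sum_sieveProduct_mul hSP hSP'
  have hpos : ∀ p ∈ P, 0 < p := fun p hp ↦ Nat.cast_pos.1 (h.cast_pos hp)
  have hQ : 0 < ∏ p ∈ S ∪ S', p := prod_pos fun p hp ↦ hpos p (union_subset hSP hSP' hp)
  have hnonneg : 0 ≤ ∑ t ∈ range (∏ p ∈ S ∪ S', p),
      sieveProduct B ω S t * sieveProduct B ω S' t := by
    have := (h.weight_pos hSP).le
    rw [hperiod]
    split_ifs <;> positivity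
  have hbound : ∀ t, |sieveProduct B ω S t * sieveProduct B ω S' t| ≤ (z : ℝ) ^ 2 := fun t ↦ by
    rw [abs_mul, sq]
    exact mul_le_mul (h.abs_sieveProduct_le hS t) (h.abs_sieveProduct_le hS' t) (abs_nonneg _)
      z.cast_nonneg
  have hsize : ((∏ p ∈ S ∪ S', p : ℕ) : ℝ) * z ^ 2 ≤ (z : ℝ) ^ 4 := by
    exact_mod_cast (Nat.mul_le_mul_right (z ^ 2)
      (mem_sieveModuli.1 (union_mem_sieveModuli hpos hS hS')).2).trans_eq (by ring)
  refine (sum_range_le_of_periodic hQ (h.periodic_sieveProduct_mul hSP hSP') hbound hnonneg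
    X).trans (add_le_add (le_of_eq ?_) hsize)
  rw [hperiod]
  split_ifs
  · rw [mul_div_cancel_left₀ _ (Nat.cast_ne_zero.2 hQ.ne')]
  · rw [zero_div, mul_zero]

lemma sum_sq_sieveProduct_le (h : IsResidueSieve P B ω) {z X : ℕ} {a : Finset ℕ → ℝ}
    (ha : ∀ S, S ⊆ P → 0 ≤ a S) :
    ∑ t ∈ range X, (∑ S ∈ sieveModuli P z, a S * sieveProduct B ω S t) ^ 2 ≤
      X * ∑ S ∈ sieveModuli P z, a S ^ 2 / selbergWeight ω S +
        (∑ S ∈ sieveModuli P z, a S) ^ 2 * z ^ 4 := by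
  calc ∑ t ∈ range X, (∑ S ∈ sieveModuli P z, a S * sieveProduct B ω S t) ^ 2
      = ∑ S ∈ sieveModuli P z, ∑ S' ∈ sieveModuli P z, a S * a S' *
          ∑ t ∈ range X, sieveProduct B ω S t * sieveProduct B ω S' t := by
        simp_rw [sq, sum_mul_sum, mul_sum]
        rw [sum_comm]
        refine sum_congr rfl fun S _ ↦ ?_
        rw [sum_comm]
        exact sum_congr rfl fun S' _ ↦ sum_congr rfl fun t _ ↦ by ring
    _ ≤ ∑ S ∈ sieveModuli P z, ∑ S' ∈ sieveModuli P z, a S * a S' *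
          ((if S = S' then X * (selbergWeight ω S)⁻¹ else 0) + (z : ℝ) ^ 4) := by
        refine sum_le_sum fun S hS ↦ sum_le_sum fun S' hS' ↦ ?_
        exact mul_le_mul_of_nonneg_left (h.sum_range_sieveProduct_mul_le hS hS' X)
          (mul_nonneg (ha S (mem_sieveModuli.1 hS).1) (ha S' (mem_sieveModuli.1 hS').1))
    _ = X * ∑ S ∈ sieveModuli P z, a S ^ 2 / selbergWeight ω S +
          (∑ S ∈ sieveModuli P z, a S) ^ 2 * z ^ 4 := by
        simp_rw [mul_add, sum_add_distrib, mul_ite, mul_zero]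
        rw [sq (∑ S ∈ sieveModuli P z, a S), sum_mul_sum, mul_sum]
        simp_rw [← sum_mul]
        congr 1
        refine sum_congr rfl fun S hS ↦ ?_
        rw [sum_ite_eq, if_pos hS]
        ring

theorem card_unremoved_le (h : IsResidueSieve P B ω) (X : ℕ) {z : ℕ} (hz : 1 ≤ z) :
    (#{t ∈ range X | ∀ p ∈ P, ¬ B p t} : ℝ) ≤ X / selbergSum ω P z + z ^ 4 := by
  set G := selbergSum ω P z with hG
  have hG0 : 0 < G := selbergSum_pos (fun p ↦ h.pos) h.lt hz
  -- The coefficients minimise the quadratic form subject to having sum `1`.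
  let a : Finset ℕ → ℝ := fun S ↦ selbergWeight ω S / G
  have ha1 : ∑ S ∈ sieveModuli P z, a S = 1 := by
    rw [← sum_div, ← selbergSum, ← hG, div_self hG0.ne']
  have ha2 : ∑ S ∈ sieveModuli P z, a S ^ 2 / selbergWeight ω S = 1 / G := by
    rw [← ha1, sum_div]
    refine sum_congr rfl fun S hS ↦ ?_
    have := (h.weight_pos (mem_sieveModuli.1 hS).1).ne'
    simp only [a]
    field_simp
  calc (#{t ∈ range X | ∀ p ∈ P, ¬ B p t} : ℝ)
      = ∑ t ∈ range X, if ∀ p ∈ P, ¬ B p t then (1 : ℝ) else 0 := by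
        rw [card_filter, Nat.cast_sum]
        simp_rw [Nat.cast_ite, Nat.cast_one, Nat.cast_zero]
    _ ≤ ∑ t ∈ range X, (∑ S ∈ sieveModuli P z, a S * sieveProduct B ω S t) ^ 2 := by
        refine sum_le_sum fun t _ ↦ ?_
        split_ifs with ht
        · rw [sum_congr rfl fun S hS ↦ by
            rw [sieveProduct_eq_one fun p hp ↦ ht p ((mem_sieveModuli.1 hS).1 hp), mul_one],
            ha1, one_pow]
        · positivity
    _ ≤ X / G + z ^ 4 := by
        refine (h.sum_sq_sieveProduct_le fun S hS ↦ div_nonneg (h.weight_pos hS).le hG0.le).trans ?_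
        rw [ha1, ha2]
        exact le_of_eq (by ring)

end IsResidueSieve

end SelbergSieve

section SelbergSumBounds

open Finset

variable {ι R : Type*} [DecidableEq ι] [CommRing R]

lemma filter_union_eq_of_subset {U V : Finset ι} (hVU : V ⊆ U) :
    {x ∈ U.powerset ×ˢ U.powerset | x.1 ∪ x.2 = V} =
      {x ∈ V.powerset ×ˢ V.powerset | x.1 ∪ x.2 = V} := by
  ext x
  simp only [mem_filter, mem_product, mem_powerset, and_congr_left_iff]
  rintro rfl
  simp [subset_union_left.trans hVU, subset_union_right.trans hVU]

lemma sum_filter_union_eq (u v : ι → R) (U : Finset ι) :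
    ∑ x ∈ U.powerset ×ˢ U.powerset with x.1 ∪ x.2 = U, (∏ i ∈ x.1, u i) * ∏ i ∈ x.2, v i =
      ∏ i ∈ U, ((1 + u i) * (1 + v i) - 1) := by
  induction U using Finset.strongInduction with
  | H U ih =>
    have hsum : ∑ V ∈ U.powerset, ∑ x ∈ V.powerset ×ˢ V.powerset with x.1 ∪ x.2 = V,
        (∏ i ∈ x.1, u i) * ∏ i ∈ x.2, v i =
          ∑ V ∈ U.powerset, ∏ i ∈ V, ((1 + u i) * (1 + v i) - 1) := by
      rw [sum_congr rfl fun V hV ↦ by rw [← filter_union_eq_of_subset (mem_powerset.1 hV)],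
        sum_fiberwise_of_maps_to fun x hx ↦ ?_, ← prod_one_add,
        sum_product' (f := fun A B ↦ (∏ i ∈ A, u i) * ∏ i ∈ B, v i), ← sum_mul_sum,
        ← prod_one_add, ← prod_one_add, ← prod_mul_distrib]
      · simp only [add_sub_cancel]
      · rw [mem_product, mem_powerset, mem_powerset] at hx
        exact mem_powerset.2 (union_subset hx.1 hx.2)
    rw [← add_sum_erase _ _ (mem_powerset_self U), ← add_sum_erase _ _ (mem_powerset_self U),
      sum_congr (s₁ := U.powerset.erase U) rfl fun V hV ↦ ih V (mem_ssubsets.1 hV)] at hsum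
    exact add_right_cancel hsum

variable {ω η : ℕ → ℝ} {P : Finset ℕ}

lemma selbergWeight_nonneg (hω : ∀ p ∈ P, 0 ≤ ω p) (hlt : ∀ p ∈ P, ω p < p) {S : Finset ℕ}
    (hS : S ⊆ P) : 0 ≤ selbergWeight ω S :=
  prod_nonneg fun p hp ↦ div_nonneg (hω p (hS hp)) (sub_pos.2 (hlt p (hS hp))).le

lemma selbergSum_nonneg (hω : ∀ p ∈ P, 0 ≤ ω p) (hlt : ∀ p ∈ P, ω p < p) (z : ℕ) :
    0 ≤ selbergSum ω P z :=
  sum_nonneg fun _ hS ↦ selbergWeight_nonneg hω hlt (mem_sieveModuli.1 hS).1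

lemma one_add_div_sub_mul_le {a b x : ℝ} (ha : 0 ≤ a) (hb : 0 ≤ b) (hx : a + b < x) :
    (1 + a / (x - a)) * (1 + b / (x - b)) - 1 ≤ (a + b) / (x - (a + b)) := by
  have hxa : 0 < x - a := by linarith
  have hxb : 0 < x - b := by linarith
  have hxab : 0 < x - (a + b) := by linarith
  have hleft : (1 + a / (x - a)) * (1 + b / (x - b)) = x ^ 2 / ((x - a) * (x - b)) := by
    field_simp
    ring
  have hright : (a + b) / (x - (a + b)) + 1 = x / (x - (a + b)) := by
    field_simp
    ring
  rw [sub_le_iff_le_add, hleft, hright, div_le_div_iff₀ (by positivity) hxab]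
  nlinarith [mul_nonneg (mul_nonneg ha hb) (by linarith : 0 ≤ x)]

lemma sum_filter_union_selbergWeight_le {U : Finset ℕ} (hω : ∀ p ∈ U, 0 ≤ ω p)
    (hη : ∀ p ∈ U, 0 ≤ η p) (hlt : ∀ p ∈ U, ω p + η p < p) :
    ∑ x ∈ U.powerset ×ˢ U.powerset with x.1 ∪ x.2 = U,
      selbergWeight ω x.1 * selbergWeight η x.2 ≤ selbergWeight (ω + η) U := by
  simp only [selbergWeight]
  rw [sum_filter_union_eq]
  refine prod_le_prod (fun p hp ↦ ?_) fun p hp ↦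
    one_add_div_sub_mul_le (hω p hp) (hη p hp) (hlt p hp)
  have hu : 0 ≤ ω p / (p - ω p) := div_nonneg (hω p hp) (by linarith [hη p hp, hlt p hp])
  have hv : 0 ≤ η p / (p - η p) := div_nonneg (hη p hp) (by linarith [hω p hp, hlt p hp])
  nlinarith [mul_nonneg hu hv]

lemma selbergSum_mul_selbergSum_le (hω : ∀ p ∈ P, 0 ≤ ω p) (hη : ∀ p ∈ P, 0 ≤ η p)
    (hlt : ∀ p ∈ P, ω p + η p < p) (z y : ℕ) :
    selbergSum ω P z * selbergSum η P y ≤ selbergSum (ω + η) P (z * y) := by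
  have hltω : ∀ p ∈ P, ω p < p := fun p hp ↦ by linarith [hη p hp, hlt p hp]
  have hltη : ∀ p ∈ P, η p < p := fun p hp ↦ by linarith [hω p hp, hlt p hp]
  have hpos : ∀ p ∈ P, 0 < p := fun p hp ↦ Nat.cast_pos.1 ((hω p hp).trans_lt (hltω p hp))
  rw [selbergSum, selbergSum, sum_mul_sum, ← sum_product',
    ← sum_fiberwise_of_maps_to (g := fun x ↦ x.1 ∪ x.2) fun x hx ↦
      union_mem_sieveModuli hpos (mem_product.1 hx).1 (mem_product.1 hx).2]
  refine sum_le_sum fun U hU ↦ ?_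
  have hUP := (mem_sieveModuli.1 hU).1
  refine le_trans (sum_le_sum_of_subset_of_nonneg (fun x hx ↦ ?_) fun x hx _ ↦ ?_)
    (sum_filter_union_selbergWeight_le (fun p hp ↦ hω p (hUP hp)) (fun p hp ↦ hη p (hUP hp))
      fun p hp ↦ hlt p (hUP hp))
  · have hxU := (mem_filter.1 hx).2
    rw [mem_filter, mem_product, mem_powerset, mem_powerset, ← hxU]
    exact ⟨⟨subset_union_left, subset_union_right⟩, rfl⟩
  · rw [mem_filter, mem_product, mem_powerset, mem_powerset] at hx
    exact mul_nonneg (selbergWeight_nonneg hω hltω (hx.1.1.trans hUP))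
      (selbergWeight_nonneg hη hltη (hx.1.2.trans hUP))

lemma selbergSum_one_pow_le {k : ℕ} (hP : ∀ p ∈ P, 1 < p) (hk : ∀ p ∈ P, k < p) (y : ℕ) :
    selbergSum 1 P y ^ k ≤ selbergSum (k : ℕ → ℝ) P (y ^ k) := by
  induction k with
  | zero =>
    have hempty : ∅ ∈ sieveModuli P (y ^ 0) := mem_sieveModuli.2 ⟨empty_subset P, by simp⟩
    refine le_trans (le_of_eq ?_) (single_le_sum (fun S hS ↦ ?_) hempty)
    · simp [selbergWeight]
    · exact selbergWeight_nonneg (P := P) (by simp) (by simpa using hk) (mem_sieveModuli.1 hS).1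
  | succ k ih =>
    rw [pow_succ, pow_succ, Nat.cast_succ]
    refine (mul_le_mul_of_nonneg_right (ih fun p hp ↦ k.lt_succ_self.trans (hk p hp)) ?_).trans
      (selbergSum_mul_selbergSum_le (by simp) (by simp) (fun p hp ↦ ?_) _ _)
    · exact selbergSum_nonneg (by simp) (by simpa using hP) y
    · simpa using (mod_cast hk p hp : (k : ℝ) + 1 < p)

/-- The Euler product `∏ p ∈ D, (1 - 1 / p)⁻¹`, that is, the sum of `1 / n` over the integers `n`
composed of primes of `D`. -/
noncomputable def eulerProd (D : Finset ℕ) : ℝ := ∏ p ∈ D, (1 - (p : ℝ)⁻¹)⁻¹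

lemma sum_inv_le_eulerProd {D N : Finset ℕ} (hD : ∀ p ∈ D, p.Prime)
    (hN : ∀ n ∈ N, n ∈ Nat.factoredNumbers D) : ∑ n ∈ N, (n : ℝ)⁻¹ ≤ eulerProd D := by
  let f : ℕ →* ℝ := ⟨⟨fun n ↦ (n : ℝ)⁻¹, by simp⟩, fun a b ↦ by simp [mul_comm]⟩
  have hf : ∀ {p : ℕ}, p.Prime → ‖f p‖ < 1 := fun hp ↦ by
    simpa [f] using inv_lt_one_of_one_lt₀ (Nat.one_lt_cast.2 hp.one_lt)
  have hsum := (EulerProduct.summable_and_hasSum_factoredNumbers_prod_filter_prime_geometric hf D).2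
  rw [filter_true_of_mem hD] at hsum
  refine le_trans (le_of_eq ?_)
    (sum_le_hasSum (N.subtype (· ∈ Nat.factoredNumbers D)) (fun n _ ↦ ?_) hsum)
  · exact (sum_subtype_of_mem (f := fun n : ℕ ↦ f n) hN).symm
  · exact inv_nonneg.2 (Nat.cast_nonneg _)

lemma selbergWeight_one_eq {S : Finset ℕ} (hS : ∀ p ∈ S, 1 < p) :
    selbergWeight 1 S = ((∏ p ∈ S, p : ℕ) : ℝ)⁻¹ * eulerProd S := by
  rw [selbergWeight, eulerProd, Nat.cast_prod, ← prod_inv_distrib, ← prod_mul_distrib]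
  refine prod_congr rfl fun p hp ↦ ?_
  have hp1 : (1 : ℝ) < p := Nat.one_lt_cast.2 (hS p hp)
  have hp0 : (p : ℝ) ≠ 0 := by positivity
  have hsub : (p : ℝ) - 1 ≠ 0 := by linarith
  rw [Pi.one_apply]
  field_simp

lemma sum_inv_filter_primeFactors_eq_le {S : Finset ℕ} (hS : ∀ p ∈ S, p.Prime) (y : ℕ) :
    ∑ n ∈ Icc 1 y with n.primeFactors = S, (n : ℝ)⁻¹ ≤ selbergWeight 1 S := by
  set d := ∏ p ∈ S, p with hd
  have hd0 : 0 < d := prod_pos fun p hp ↦ (hS p hp).pos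
  have hdvd : ∀ n ∈ {n ∈ Icc 1 y | n.primeFactors = S}, d ∣ n := fun n hn ↦ by
    rw [hd, ← (mem_filter.1 hn).2]
    exact n.prod_primeFactors_dvd
  have hinj : Set.InjOn (· / d) ({n ∈ Icc 1 y | n.primeFactors = S} : Finset ℕ) :=
    fun a ha b hb hab ↦ (Nat.div_left_inj (hdvd a ha) (hdvd b hb)).1 hab
  rw [selbergWeight_one_eq fun p hp ↦ (hS p hp).one_lt]
  calc ∑ n ∈ Icc 1 y with n.primeFactors = S, (n : ℝ)⁻¹
      = (d : ℝ)⁻¹ * ∑ n ∈ Icc 1 y with n.primeFactors = S, ((n / d : ℕ) : ℝ)⁻¹ := by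
        rw [mul_sum]
        refine sum_congr rfl fun n hn ↦ ?_
        rw [← mul_inv, ← Nat.cast_mul, Nat.mul_div_cancel' (hdvd n hn)]
    _ = (d : ℝ)⁻¹ * ∑ e ∈ {n ∈ Icc 1 y | n.primeFactors = S}.image (· / d), (e : ℝ)⁻¹ := by
        rw [sum_image hinj]
    _ ≤ (d : ℝ)⁻¹ * eulerProd S := by
        refine mul_le_mul_of_nonneg_left (sum_inv_le_eulerProd hS fun e he ↦ ?_) (by positivity)
        obtain ⟨n, hn, rfl⟩ := mem_image.1 he
        have hdn := hdvd n hn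
        rw [mem_filter, mem_Icc] at hn
        exact Nat.mem_factoredNumbers_of_dvd
          (Nat.mem_factoredNumbers_of_primeFactors_subset (by lia) hn.2.subset)
          (Nat.div_dvd_of_dvd hdn)

lemma log_le_selbergSum_one (y : ℕ) :
    Real.log y ≤ selbergSum 1 (y + 1).primesBelow y := by
  have hmaps : ∀ n ∈ Icc 1 y, n.primeFactors ∈ sieveModuli (y + 1).primesBelow y := fun n hn ↦ by
    rw [mem_Icc] at hn
    refine mem_sieveModuli.2 ⟨fun p hp ↦ Nat.mem_primesBelow.2
      ⟨?_, Nat.prime_of_mem_primeFactors hp⟩,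
      (Nat.le_of_dvd hn.1 n.prod_primeFactors_dvd).trans hn.2⟩
    exact Nat.lt_succ_of_le ((Nat.le_of_mem_primeFactors hp).trans hn.2)
  calc Real.log y ≤ ∑ n ∈ Icc 1 y, (n : ℝ)⁻¹ := by
        rcases y.eq_zero_or_pos with rfl | hy
        · simp
        refine (Real.log_le_log (Nat.cast_pos.2 hy) (by norm_num)).trans
          ((log_add_one_le_harmonic y).trans_eq ?_)
        rw [harmonic_eq_sum_Icc]
        push_cast
        rfl
    _ = ∑ S ∈ sieveModuli (y + 1).primesBelow y,
          ∑ n ∈ Icc 1 y with n.primeFactors = S, (n : ℝ)⁻¹ :=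
        (sum_fiberwise_of_maps_to hmaps _).symm
    _ ≤ selbergSum 1 (y + 1).primesBelow y := sum_le_sum fun S hS ↦
        sum_inv_filter_primeFactors_eq_le
          (fun p hp ↦ (Nat.mem_primesBelow.1 ((mem_sieveModuli.1 hS).1 hp)).2) y

lemma eulerProd_eq_sum_powerset {D : Finset ℕ} (hD : ∀ p ∈ D, 1 < p) :
    eulerProd D = ∑ A ∈ D.powerset, selbergWeight 1 A := by
  simp only [selbergWeight]
  rw [← prod_one_add, eulerProd]
  refine prod_congr rfl fun p hp ↦ ?_
  have hp1 : (1 : ℝ) < p := Nat.one_lt_cast.2 (hD p hp)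
  have hp0 : (p : ℝ) ≠ 0 := by positivity
  have hsub : (p : ℝ) - 1 ≠ 0 := by linarith
  rw [Pi.one_apply]
  field_simp
  ring

lemma selbergSum_one_le_eulerProd_mul {D : Finset ℕ} (hP : ∀ p ∈ P, 1 < p) (hD : ∀ p ∈ D, 1 < p)
    (z : ℕ) : selbergSum 1 P z ≤ eulerProd D * selbergSum 1 (P \ D) z := by
  have hnonneg : ∀ {Q : Finset ℕ}, (∀ p ∈ Q, 1 < p) → ∀ {S}, S ⊆ Q → 0 ≤ selbergWeight 1 S :=
    fun hQ _ hS ↦ selbergWeight_nonneg (by simp) (by simpa using hQ) hS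
  have hinj : Set.InjOn (fun S ↦ (S ∩ D, S \ D)) (sieveModuli P z) := fun S _ T _ hST ↦ by
    rw [← sup_inf_sdiff S D, ← sup_inf_sdiff T D]
    exact congrArg₂ _ (Prod.mk.inj hST).1 (Prod.mk.inj hST).2
  rw [eulerProd_eq_sum_powerset hD, selbergSum, selbergSum, sum_mul_sum, ← sum_product']
  calc ∑ S ∈ sieveModuli P z, selbergWeight 1 S
      = ∑ x ∈ (sieveModuli P z).image fun S ↦ (S ∩ D, S \ D),
          selbergWeight 1 x.1 * selbergWeight 1 x.2 := by
        rw [sum_image hinj]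
        exact sum_congr rfl fun S _ ↦ (prod_inter_mul_prod_sdiff S D _).symm
    _ ≤ _ := by
        refine sum_le_sum_of_subset_of_nonneg (image_subset_iff.2 fun S hS ↦ ?_) fun x hx _ ↦ ?_
        · rw [mem_sieveModuli] at hS
          refine mem_product.2 ⟨mem_powerset.2 inter_subset_right, mem_sieveModuli.2
            ⟨sdiff_subset_sdiff hS.1 subset_rfl, le_trans ?_ hS.2⟩⟩
          exact prod_le_prod_of_subset_of_one_le' sdiff_subset fun p hp _ ↦ (hP p (hS.1 hp)).le
        · obtain ⟨hx1, hx2⟩ := mem_product.1 hx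
          exact mul_nonneg (hnonneg hD (mem_powerset.1 hx1))
            (hnonneg hP ((mem_sieveModuli.1 hx2).1.trans sdiff_subset))

lemma eulerProd_pos {D : Finset ℕ} (hD : ∀ p ∈ D, 1 < p) : 0 < eulerProd D :=
  prod_pos fun p hp ↦ inv_pos.2 (sub_pos.2 (inv_lt_one_of_one_lt₀ (Nat.one_lt_cast.2 (hD p hp))))

lemma log_div_eulerProd_pow_le_selbergSum {D : Finset ℕ} (hD : ∀ p ∈ D, p.Prime) {k : ℕ} (Y : ℕ)
    (hk : ∀ p : ℕ, p.Prime → p ∉ D → k < p) :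
    (Real.log Y / eulerProd D) ^ k ≤ selbergSum (k : ℕ → ℝ) ((Y + 1).primesBelow \ D) (Y ^ k) := by
  have hD1 : ∀ p ∈ D, 1 < p := fun p hp ↦ (hD p hp).one_lt
  have hP : ∀ p ∈ (Y + 1).primesBelow, p.Prime := fun p hp ↦ (Nat.mem_primesBelow.1 hp).2
  refine le_trans ?_ (selbergSum_one_pow_le (fun p hp ↦ ?_) (fun p hp ↦ ?_) Y)
  · refine pow_le_pow_left₀ (div_nonneg (Real.log_natCast_nonneg Y) (eulerProd_pos hD1).le) ?_ k
    rw [div_le_iff₀' (eulerProd_pos hD1)]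
    exact (log_le_selbergSum_one Y).trans
      (selbergSum_one_le_eulerProd_mul (fun p hp ↦ (hP p hp).one_lt) hD1 Y)
  · exact (hP p (mem_sdiff.1 hp).1).one_lt
  · exact hk p (hP p (mem_sdiff.1 hp).1) (mem_sdiff.1 hp).2

end SelbergSumBounds

section PrimeTuples

open Finset

variable {ι : Type*} [Fintype ι] {W : ℕ} {c : ι → ℕ}

lemma card_filter_exists_dvd {p : ℕ} (hp : p.Prime) (hpW : ¬ p ∣ W)
    (hc : Function.Injective fun i ↦ (c i : ZMod p)) :
    #{t ∈ range p | ∃ i, p ∣ W * t + c i} = Fintype.card ι := by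
  classical
  have : Fact p.Prime := ⟨hp⟩
  have hW : (W : ZMod p) ≠ 0 := by rwa [Ne, ZMod.natCast_eq_zero_iff]
  have hdvd : ∀ t i, p ∣ W * t + c i ↔ (t : ZMod p) = -(c i : ZMod p) / W := fun t i ↦ by
    rw [← ZMod.natCast_eq_zero_iff, Nat.cast_add, Nat.cast_mul, eq_div_iff hW,
      eq_neg_iff_add_eq_zero, mul_comm]
  have hinj : Function.Injective fun i ↦ (-(c i : ZMod p) / W).val := fun i j hij ↦
    hc (neg_injective ((div_left_inj' hW).1 (ZMod.val_injective p hij)))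
  rw [← card_univ, ← card_image_of_injective univ hinj]
  congr 1
  ext t
  simp only [mem_filter, mem_range, mem_image, mem_univ, true_and, hdvd]
  constructor
  · rintro ⟨ht, i, hi⟩
    exact ⟨i, by rw [← hi, ZMod.val_natCast_of_lt ht]⟩
  · rintro ⟨i, rfl⟩
    exact ⟨ZMod.val_lt _, i, by rw [ZMod.natCast_zmod_val]⟩

lemma isResidueSieve_tuple [Nonempty ι] {P : Finset ℕ} (hP : ∀ p ∈ P, p.Prime)
    (hW : ∀ p ∈ P, ¬ p ∣ W) (hcard : ∀ p ∈ P, Fintype.card ι < p)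
    (hc : ∀ p ∈ P, Function.Injective fun i ↦ (c i : ZMod p)) :
    IsResidueSieve P (fun p t ↦ ∃ i, p ∣ W * t + c i) (Fintype.card ι : ℕ → ℝ) where
  coprime p hp p' hp' hne := (Nat.coprime_primes (hP p hp) (hP p' hp')).2 hne
  periodic p _ t := by
    simp only [mul_add, add_right_comm _ (W * p), Nat.dvd_add_left (dvd_mul_left p W)]
  card_eq p hp := by
    rw [Pi.natCast_apply, ← card_filter_exists_dvd (hP p hp) (hW p hp) (hc p hp)]
  one_le p _ := Nat.one_le_cast.2 Fintype.card_pos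
  lt p hp := Nat.cast_lt.2 (hcard p hp)

theorem card_prime_tuple_le [Nonempty ι] {D : Finset ℕ} (hD : ∀ p ∈ D, p.Prime)
    (hW : ∀ p, p.Prime → p ∣ W → p ∈ D) (hcard : ∀ p, p.Prime → p ≤ Fintype.card ι → p ∈ D)
    (hc : ∀ p, p.Prime → p ∉ D → Function.Injective fun i ↦ (c i : ZMod p))
    {Y : ℕ} (hY : 2 ≤ Y) (X : ℕ) :
    (#{t ∈ range X | ∀ i, (W * t + c i).Prime ∧ Y < W * t + c i} : ℝ) ≤
      X * (eulerProd D / Real.log Y) ^ Fintype.card ι + ((Y : ℝ) ^ Fintype.card ι) ^ 4 := by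
  classical
  set P := (Y + 1).primesBelow \ D
  have hPD : ∀ p ∈ P, p.Prime ∧ p ∉ D ∧ p ≤ Y := fun p hp ↦ by
    obtain ⟨hpY, hpD⟩ := mem_sdiff.1 hp
    exact ⟨(Nat.mem_primesBelow.1 hpY).2, hpD, Nat.le_of_lt_succ (Nat.mem_primesBelow.1 hpY).1⟩
  have hlarge : ∀ p : ℕ, p.Prime → p ∉ D → Fintype.card ι < p := fun p hp hpD ↦
    lt_of_not_ge fun hle ↦ hpD (hcard p hp hle)
  have hsieve := isResidueSieve_tuple (fun p hp ↦ (hPD p hp).1)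
    (fun p hp hdvd ↦ (hPD p hp).2.1 (hW p (hPD p hp).1 hdvd))
    (fun p hp ↦ hlarge p (hPD p hp).1 (hPD p hp).2.1)
    (fun p hp ↦ hc p (hPD p hp).1 (hPD p hp).2.1)
  have hsub : {t ∈ range X | ∀ i, (W * t + c i).Prime ∧ Y < W * t + c i} ⊆
      {t ∈ range X | ∀ p ∈ P, ¬ ∃ i, p ∣ W * t + c i} := by
    refine monotone_filter_right _ fun t _ ht p hp ⟨i, hi⟩ ↦ ?_
    have hpeq := (Nat.prime_dvd_prime_iff_eq (hPD p hp).1 (ht i).1).1 hi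
    exact ((hPD p hp).2.2.trans_lt (ht i).2).ne hpeq
  have hmain : 0 < Real.log Y / eulerProd D :=
    div_pos (Real.log_pos (by exact_mod_cast hY)) (eulerProd_pos fun p hp ↦ (hD p hp).one_lt)
  calc (#{t ∈ range X | ∀ i, (W * t + c i).Prime ∧ Y < W * t + c i} : ℝ)
      ≤ #{t ∈ range X | ∀ p ∈ P, ¬ ∃ i, p ∣ W * t + c i} := Nat.cast_le.2 (card_le_card hsub)
    _ ≤ X / selbergSum (Fintype.card ι : ℕ → ℝ) P (Y ^ Fintype.card ι) +
          ((Y ^ Fintype.card ι : ℕ) : ℝ) ^ 4 :=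
        hsieve.card_unremoved_le X (Nat.one_le_pow _ _ (by lia))
    _ ≤ X / (Real.log Y / eulerProd D) ^ Fintype.card ι + ((Y : ℝ) ^ Fintype.card ι) ^ 4 := by
        rw [Nat.cast_pow]
        gcongr
        exact log_div_eulerProd_pow_le_selbergSum hD Y hlarge
    _ = X * (eulerProd D / Real.log Y) ^ Fintype.card ι + ((Y : ℝ) ^ Fintype.card ι) ^ 4 := by
        rw [div_eq_mul_inv, ← inv_pow, inv_div]

/-- The product of the distances between distinct members of a tuple: the primes dividing it are
those modulo which the tuple takes the same value twice. -/
def tupleDiscriminant [DecidableEq ι] (c : ι → ℕ) : ℕ :=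
  ∏ x ∈ univ.offDiag, Nat.dist (c x.1) (c x.2)

lemma tupleDiscriminant_ne_zero [DecidableEq ι] (hc : Function.Injective c) :
    tupleDiscriminant c ≠ 0 :=
  prod_ne_zero_iff.2 fun _ hx ↦
    (Nat.dist_pos_of_ne (hc.ne (mem_offDiag.1 hx).2.2)).ne'

lemma tupleDiscriminant_le [DecidableEq ι] {H : ℕ} (hcH : ∀ i j, c i ≤ c j + H) :
    tupleDiscriminant c ≤ H ^ (Fintype.card ι * Fintype.card ι - Fintype.card ι) := by
  refine (prod_le_pow_card _ _ H fun x _ ↦ ?_).trans_eq (by rw [offDiag_card, card_univ])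
  have := hcH x.1 x.2
  have := hcH x.2 x.1
  rw [Nat.dist]
  lia

lemma dvd_tupleDiscriminant [DecidableEq ι] {p : ℕ} {i j : ι} (hij : i ≠ j)
    (hp : (c i : ZMod p) = c j) : p ∣ tupleDiscriminant c := by
  have hmem : (i, j) ∈ univ.offDiag := mem_offDiag.2 ⟨mem_univ i, mem_univ j, hij⟩
  refine dvd_trans ?_ (dvd_prod_of_mem _ hmem)
  rw [ZMod.natCast_eq_natCast_iff] at hp
  rcases le_total (c i) (c j) with hle | hle
  · rw [Nat.dist_eq_sub_of_le hle]
    exact (Nat.modEq_iff_dvd' hle).1 hp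
  · rw [Nat.dist_eq_sub_of_le_right hle]
    exact (Nat.modEq_iff_dvd' hle).1 hp.symm

lemma eulerProd_primeFactors (hW : W ≠ 0) : eulerProd W.primeFactors = W / W.totient := by
  have htot : (W.totient : ℝ) = W * ∏ p ∈ W.primeFactors, (1 - (p : ℝ)⁻¹) := by
    simpa using congrArg (Rat.cast : ℚ → ℝ) (Nat.totient_eq_mul_prod_factors W)
  rw [eulerProd, prod_inv_distrib, htot, div_mul_cancel_left₀ (Nat.cast_ne_zero.2 hW)]

lemma eulerProd_pow_le_two {V : Finset ℕ} {w N ρ : ℕ} (hw : 1 < w) (hV : ∀ p ∈ V, w ≤ p)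
    (hprod : ∏ p ∈ V, p ≤ w ^ N) (hN : 2 * (N * ρ) ≤ w) : eulerProd V ^ ρ ≤ 2 := by
  have hcard : #V ≤ N :=
    (Nat.pow_le_pow_iff_right hw).1 ((pow_card_le_prod V _ w hV).trans hprod)
  have hw0 : (0 : ℝ) < w := by positivity
  have hw1 : (w : ℝ)⁻¹ < 1 := inv_lt_one_of_one_lt₀ (Nat.one_lt_cast.2 hw)
  have hsmall : (#V * ρ : ℕ) * (w : ℝ)⁻¹ ≤ 1 / 2 := by
    have hle : 2 * (#V * ρ) ≤ w := le_trans (by gcongr) hN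
    rw [← div_eq_mul_inv, div_le_div_iff₀ hw0 two_pos]
    exact_mod_cast (by lia : #V * ρ * 2 ≤ 1 * w)
  have hhalf : 1 / 2 ≤ (∏ p ∈ V, (1 - (p : ℝ)⁻¹)) ^ ρ :=
    calc (1 / 2 : ℝ) ≤ 1 + (#V * ρ : ℕ) * -(w : ℝ)⁻¹ := by linarith
      _ ≤ (1 + -(w : ℝ)⁻¹) ^ (#V * ρ) := one_add_mul_le_pow (by linarith) _
      _ = (∏ _p ∈ V, (1 - (w : ℝ)⁻¹)) ^ ρ := by rw [prod_const, pow_mul, sub_eq_add_neg]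
      _ ≤ (∏ p ∈ V, (1 - (p : ℝ)⁻¹)) ^ ρ := by
          refine pow_le_pow_left₀ (prod_nonneg fun _ _ ↦ by linarith) (prod_le_prod
            (fun _ _ ↦ by linarith) fun p hp ↦ ?_) ρ
          exact sub_le_sub_left (inv_anti₀ hw0 (Nat.cast_le.2 (hV p hp))) 1
  rw [eulerProd, prod_inv_distrib, inv_pow]
  exact inv_le_of_inv_le₀ two_pos (by rwa [← one_div])

theorem card_prime_tuple_le_of_smooth [Nonempty ι] (hW0 : W ≠ 0) {w N H : ℕ}
    (hcard : Fintype.card ι ≤ w) (hWw : ∀ p, p.Prime → p ≤ w → p ∣ W)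
    (hw : 1 < w) (hc : Function.Injective c) (hcH : ∀ i j, c i ≤ c j + H)
    (hH : H ^ (Fintype.card ι * Fintype.card ι - Fintype.card ι) ≤ w ^ N)
    (hN : 2 * (N * Fintype.card ι) ≤ w) {Y : ℕ} (hY : 2 ≤ Y) (X : ℕ) :
    (#{t ∈ range X | ∀ i, (W * t + c i).Prime ∧ Y < W * t + c i} : ℝ) ≤
      X * (2 * (W / (W.totient * Real.log Y)) ^ Fintype.card ι) +
        ((Y : ℝ) ^ Fintype.card ι) ^ 4 := by
  classical
  set Δ := tupleDiscriminant c
  have hΔ : Δ ≠ 0 := tupleDiscriminant_ne_zero hc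
  set V := Δ.primeFactors \ W.primeFactors
  have hprime : ∀ p ∈ W.primeFactors ∪ V, p.Prime := fun p hp ↦ by
    rcases mem_union.1 hp with hp | hp
    exacts [Nat.prime_of_mem_primeFactors hp, Nat.prime_of_mem_primeFactors (sdiff_subset hp)]
  have hdvdW : ∀ p, p.Prime → p ∣ W → p ∈ W.primeFactors ∪ V := fun p hp hpW ↦
    mem_union_left _ (Nat.mem_primeFactors.2 ⟨hp, hpW, hW0⟩)
  have hVw : ∀ p ∈ V, w ≤ p := fun p hp ↦ le_of_not_gt fun hlt ↦
    have hpp := hprime p (mem_union_right _ hp)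
    (mem_sdiff.1 hp).2 (Nat.mem_primeFactors.2 ⟨hpp, hWw p hpp hlt.le, hW0⟩)
  have hVprod : ∏ p ∈ V, p ≤ w ^ N :=
    calc ∏ p ∈ V, p ≤ ∏ p ∈ Δ.primeFactors, p := prod_le_prod_of_subset_of_one_le' sdiff_subset
          fun p hp _ ↦ (Nat.prime_of_mem_primeFactors hp).one_lt.le
      _ ≤ Δ := Nat.le_of_dvd (Nat.pos_of_ne_zero hΔ) Δ.prod_primeFactors_dvd
      _ ≤ w ^ N := (tupleDiscriminant_le hcH).trans hH
  have hinj : ∀ p, p.Prime → p ∉ W.primeFactors ∪ V →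
      Function.Injective fun i ↦ (c i : ZMod p) := fun p hp hpD i j hij ↦ by
    by_contra hne
    rw [union_sdiff_self_eq_union] at hpD
    exact hpD (mem_union_right _ (Nat.mem_primeFactors.2 ⟨hp, dvd_tupleDiscriminant hne hij, hΔ⟩))
  refine (card_prime_tuple_le hprime hdvdW (fun p hp hle ↦ hdvdW p hp
    (hWw p hp (hle.trans hcard))) hinj hY X).trans ?_
  rw [eulerProd, prod_union disjoint_sdiff, ← eulerProd, ← eulerProd, eulerProd_primeFactors hW0,
    mul_div_right_comm, div_div, mul_pow, mul_comm (_ ^ _)]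
  gcongr
  exact eulerProd_pow_le_two hw hVw hVprod hN

end PrimeTuples

local notation "𝓅" => Nat.nth Nat.Prime

section ConsecutivePrimes

open Finset

lemma nth_prime_strictMono : StrictMono 𝓅 :=
  Nat.nth_strictMono Nat.infinite_setOfPred_prime

lemma card_monotone_le_choose (k N : ℕ) :
    #{u ∈ Fintype.piFinset fun _ : Fin k ↦ range (N + 1) | Monotone u} ≤ (N + k).choose k := by
  have hstrict : ∀ u : Fin k → ℕ, Monotone u → StrictMono fun i ↦ u i + (i : ℕ) :=
    fun u hu ↦ hu.add_strictMono Fin.val_strictMono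
  rw [← card_range (N + k), ← card_powersetCard]
  refine card_le_card_of_injOn (fun u ↦ univ.image fun i ↦ u i + (i : ℕ)) (fun u hu ↦ ?_)
    fun u hu v hv huv ↦ ?_
  · simp only [coe_filter, Fintype.mem_piFinset, mem_range, Set.mem_ofPred_eq] at hu
    refine mem_powersetCard.2 ⟨image_subset_iff.2 fun i _ ↦ mem_range.2 ?_, ?_⟩
    · have := hu.1 i
      lia
    · rw [card_image_of_injective _ (hstrict u hu.2).injective, card_fin]
  · simp only [coe_filter, Set.mem_ofPred_eq] at hu hv
    have hrange : Set.range (fun i ↦ u i + (i : ℕ)) = Set.range fun i ↦ v i + (i : ℕ) := by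
      simpa using congrArg (fun s : Finset ℕ ↦ (s : Set ℕ)) huv
    ext i
    exact Nat.add_right_cancel
      (congrFun (((hstrict u hu.2).range_inj (hstrict v hv.2)).1 hrange) i)

lemma choose_mul_factorial_le {k H W : ℕ} (hW : 0 < W) (hH : 20 * k * (k + 1) * W ≤ H) :
    ((H / W + 1 + k).choose k : ℝ) * k.factorial ≤ 2 * ((H : ℝ) / W) ^ k := by
  rcases Nat.eq_zero_or_pos k with rfl | hk
  · simp
  have hk0 : (0 : ℝ) < k := Nat.cast_pos.2 hk
  have hratio : 20 * k * (k + 1) ≤ (H : ℝ) / W := by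
    rw [le_div_iff₀ (Nat.cast_pos.2 hW)]
    exact_mod_cast hH
  have hshift : 1 + (k : ℝ) ≤ H / W * (1 / (2 * k)) := by
    rw [mul_one_div, le_div_iff₀ (by positivity)]
    nlinarith
  have hpow : (1 + 1 / (2 * k) : ℝ) ^ k ≤ 2 :=
    calc (1 + 1 / (2 * k) : ℝ) ^ k ≤ Real.exp (1 / (2 * k)) ^ k := by
          gcongr
          linarith [Real.add_one_le_exp (1 / (2 * k : ℝ))]
      _ = Real.exp 1 ^ (1 / 2 : ℝ) := by
          rw [← Real.exp_nat_mul, ← Real.exp_mul]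
          congr 1
          field_simp
      _ ≤ 4 ^ (1 / 2 : ℝ) := by
          gcongr
          linarith [Real.exp_one_lt_d9]
      _ = 2 := by
          rw [← Real.sqrt_eq_rpow, show (4 : ℝ) = 2 ^ 2 by norm_num, Real.sqrt_sq two_pos.le]
  calc ((H / W + 1 + k).choose k : ℝ) * k.factorial ≤ ((H / W + 1 + k : ℕ) : ℝ) ^ k :=
        (le_div_iff₀ (by positivity)).1 (Nat.choose_le_pow_div k (H / W + 1 + k))
    _ ≤ (H / W * (1 + 1 / (2 * k))) ^ k := by
        gcongr
        push_cast
        linarith [Nat.cast_div_le (α := ℝ) (m := H) (n := W)]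
    _ = (1 + 1 / (2 * k)) ^ k * ((H : ℝ) / W) ^ k := by rw [mul_pow, mul_comm]
    _ ≤ 2 * ((H : ℝ) / W) ^ k := by gcongr

lemma card_filter_map_mem_mul {G G' : Type*} [Group G] [Group G'] [Fintype G] [Fintype G']
    [DecidableEq G'] {f : G →* G'} (hf : Function.Surjective f) (A : Finset G') :
    #{g | f g ∈ A} * Fintype.card G' = #A * Fintype.card G := by
  have hfib : ∀ b, #{g | f g = b} = #{g | f g = 1} := fun b ↦
    MonoidHom.card_fiber_eq_of_mem_range f (hf b) (hf 1)
  have hfib_mem : ∀ b ∈ A, #{g ∈ ({g | f g ∈ A} : Finset G) | f g = b} = #{g | f g = 1} :=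
    fun b hb ↦ by
      rw [← hfib b, filter_filter]
      congr 1
      ext g
      simp only [mem_filter, mem_univ, true_and, and_iff_right_iff_imp]
      rintro rfl
      exact hb
  have hG : Fintype.card G = Fintype.card G' * #{g | f g = 1} := by
    rw [← card_univ (α := G), card_eq_sum_card_fiberwise fun g _ ↦ mem_coe.2 (mem_univ (f g)),
      sum_congr rfl fun b _ ↦ hfib b, sum_const, smul_eq_mul, card_univ]
  have hmaps : ∀ g ∈ ({g | f g ∈ A} : Finset G), f g ∈ A := fun g hg ↦ (mem_filter.1 hg).2
  rw [card_eq_sum_card_fiberwise hmaps, sum_congr rfl hfib_mem, sum_const, smul_eq_mul, hG]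
  ring

/-- The `k`-th gap after the prime of index `n` is at most `H`, the primes lying between `Y`
and `x`. -/
def IsShortGap (k H Y x n : ℕ) : Prop :=
  Y < 𝓅 n ∧ 𝓅 n ≤ x ∧ 𝓅 (n + k) ≤ 𝓅 n + H

/-- Compatible parameters for sieving `k + 1` consecutive primes up to `x` within a gap `H`:
the modulus `W` absorbs the primes up to `w`, the remaining primes up to `Y` are sieved out, and
tuples of diameter `H` have few collisions modulo primes beyond `w`. -/
structure IsSieveScale (k w N W H Y x : ℕ) : Prop where
  card_le : k + 1 ≤ w
  one_lt : 1 < w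
  smooth : ∀ p, p.Prime → p ≤ w → p ∣ W
  gap_pow_le : H ^ ((k + 1) * (k + 1) - (k + 1)) ≤ w ^ N
  two_mul_le : 2 * (N * (k + 1)) ≤ w
  modulus_pos : 0 < W
  modulus_le_gap : 20 * k * (k + 1) * W ≤ H
  two_le : 2 ≤ Y
  modulus_le_level : W ≤ Y
  level_le : Y ≤ x
  error_le : W * Real.log Y ^ (k + 1) * ((Y : ℝ) ^ (k + 1)) ^ 4 ≤ x

variable {k w N W H Y x : ℕ} {𝒢 : Finset ℕ}

lemma IsShortGap.bounds {n : ℕ} (h : IsShortGap k H Y x n) {i : ℕ} (hi : i ≤ k) :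
    Y < 𝓅 (n + i) ∧ 𝓅 n ≤ 𝓅 (n + i) ∧ 𝓅 (n + i) ≤ 𝓅 n + H := by
  obtain ⟨hY, -, hH⟩ := h
  have hlo : 𝓅 n ≤ 𝓅 (n + i) := nth_prime_strictMono.monotone (by lia)
  have hhi : 𝓅 (n + i) ≤ 𝓅 (n + k) := nth_prime_strictMono.monotone (by lia)
  exact ⟨hY.trans_le hlo, hlo, hhi.trans hH⟩

namespace IsSieveScale

lemma sieve_bound_le (h : IsSieveScale k w N W H Y x) :
    (x / W + 1 : ℕ) * (2 * ((W : ℝ) / (W.totient * Real.log Y)) ^ (k + 1)) +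
      ((Y : ℝ) ^ (k + 1)) ^ 4 ≤ 5 * x * W ^ k / (W.totient * Real.log Y) ^ (k + 1) := by
  have hW : (0 : ℝ) < W := Nat.cast_pos.2 h.modulus_pos
  have hφ : (0 : ℝ) < W.totient := Nat.cast_pos.2 (Nat.totient_pos.2 h.modulus_pos)
  have hφW : (W.totient : ℝ) ≤ W := Nat.cast_le.2 W.totient_le
  have hlog : 0 < Real.log Y := Real.log_pos (by exact_mod_cast h.two_le)
  have hcount : ((x / W + 1 : ℕ) : ℝ) ≤ 2 * x / W := by
    have hone : (1 : ℝ) ≤ x / W :=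
      (one_le_div hW).2 (Nat.cast_le.2 (h.modulus_le_level.trans h.level_le))
    push_cast
    rw [mul_div_assoc]
    linarith [Nat.cast_div_le (α := ℝ) (m := x) (n := W)]
  have hmain : (x / W + 1 : ℕ) * (2 * ((W : ℝ) / (W.totient * Real.log Y)) ^ (k + 1)) ≤
      4 * x * W ^ k / (W.totient * Real.log Y) ^ (k + 1) :=
    calc (x / W + 1 : ℕ) * (2 * ((W : ℝ) / (W.totient * Real.log Y)) ^ (k + 1))
        ≤ 2 * x / W * (2 * ((W : ℝ) / (W.totient * Real.log Y)) ^ (k + 1)) := by gcongr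
      _ = 4 * x * W ^ k / (W.totient * Real.log Y) ^ (k + 1) := by
          rw [div_pow, pow_succ (W : ℝ)]
          field_simp
          ring
  have herror : ((Y : ℝ) ^ (k + 1)) ^ 4 ≤ x * W ^ k / (W.totient * Real.log Y) ^ (k + 1) := by
    rw [le_div_iff₀ (by positivity), mul_pow]
    calc ((Y : ℝ) ^ (k + 1)) ^ 4 * (W.totient ^ (k + 1) * Real.log Y ^ (k + 1))
        ≤ ((Y : ℝ) ^ (k + 1)) ^ 4 * (W ^ (k + 1) * Real.log Y ^ (k + 1)) := by gcongr
      _ = W * Real.log Y ^ (k + 1) * ((Y : ℝ) ^ (k + 1)) ^ 4 * W ^ k := by ring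
      _ ≤ x * W ^ k := by
          gcongr
          exact h.error_le
  calc _ ≤ 4 * x * W ^ k / (W.totient * Real.log Y) ^ (k + 1) +
        x * W ^ k / (W.totient * Real.log Y) ^ (k + 1) := add_le_add hmain herror
    _ = _ := by ring

lemma card_offsets_le (h : IsSieveScale k w N W H Y x) (h𝒢 : ∀ n ∈ 𝒢, IsShortGap k H Y x n)
    (c : Fin (k + 1) → ℕ) :
    (#{n ∈ 𝒢 | ∀ i : Fin (k + 1), 𝓅 (n + i) = W * (𝓅 n / W) + c i} : ℝ) ≤
      5 * x * W ^ k / (W.totient * Real.log Y) ^ (k + 1) := by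
  refine le_trans ?_ h.sieve_bound_le
  rcases eq_empty_or_nonempty {n ∈ 𝒢 | ∀ i : Fin (k + 1), 𝓅 (n + i) = W * (𝓅 n / W) + c i}
    with hempty | ⟨n₀, hn₀⟩
  · have : 0 ≤ Real.log Y := by positivity
    rw [hempty, card_empty, Nat.cast_zero]
    positivity
  obtain ⟨hn₀𝒢, hn₀c⟩ := mem_filter.1 hn₀
  have hinj : Function.Injective c := fun i j hij ↦
    Fin.val_injective (Nat.add_left_cancel
      (nth_prime_strictMono.injective (by rw [hn₀c i, hn₀c j, hij])))
  have hdiam : ∀ i j, c i ≤ c j + H := fun i j ↦ by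
    have hi := (h𝒢 n₀ hn₀𝒢).bounds i.is_le
    have hj := (h𝒢 n₀ hn₀𝒢).bounds j.is_le
    rw [hn₀c] at hi hj
    lia
  have htuple := card_prime_tuple_le_of_smooth (c := c) (N := N) h.modulus_pos.ne'
    (by simpa using h.card_le) h.smooth h.one_lt hinj hdiam (by simpa using h.gap_pow_le)
    (by simpa using h.two_mul_le) h.two_le (x / W + 1)
  simp only [Fintype.card_fin] at htuple
  refine le_trans (Nat.cast_le.2 (card_le_card_of_injOn (fun n ↦ 𝓅 n / W)
    (fun n hn ↦ ?_) fun n hn n' hn' hnn' ↦ ?_)) htuple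
  · obtain ⟨hn𝒢, hnc⟩ := mem_filter.1 hn
    simp only [coe_filter, mem_range, Set.mem_ofPred_eq, Nat.lt_succ_iff]
    refine ⟨Nat.div_le_div_right (h𝒢 n hn𝒢).2.1, fun i ↦ ?_⟩
    rw [← hnc i]
    exact ⟨Nat.prime_nth_prime _, ((h𝒢 n hn𝒢).bounds i.is_le).1⟩
  · have hn0 := (mem_filter.1 hn).2 0
    have hn'0 := (mem_filter.1 hn').2 0
    refine nth_prime_strictMono.injective ?_
    rw [Fin.val_zero, add_zero] at hn0 hn'0
    rw [hn0, hn'0]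
    exact congrArg (W * · + c 0) hnn'

end IsSieveScale

/-- The number of multiples of `W` separating the prime of index `n` from each of its first `k`
successors. -/
noncomputable def quotientOffsets (k W n : ℕ) : Fin k → ℕ :=
  fun i ↦ 𝓅 (n + i + 1) / W - 𝓅 n / W

lemma quotientOffsets_monotone (k W n : ℕ) : Monotone (quotientOffsets k W n) := fun i j hij ↦
  Nat.sub_le_sub_right
    (Nat.div_le_div_right (nth_prime_strictMono.monotone (by have : (i : ℕ) ≤ j := hij; lia))) _

lemma IsShortGap.quotientOffsets_le {n : ℕ} (h : IsShortGap k H Y x n) (hW : 0 < W) (i : Fin k) :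
    quotientOffsets k W n i ≤ H / W + 1 := by
  have hle : 𝓅 (n + i + 1) / W ≤ (𝓅 n + H) / W := Nat.div_le_div_right (h.bounds i.is_lt).2.2
  rw [Nat.add_div hW] at hle
  rw [quotientOffsets]
  split_ifs at hle <;> lia

lemma nth_prime_eq_of_quotientOffsets_eq (hW : 0 < W) {n : ℕ} {u : Fin k → ℕ}
    {b : Fin (k + 1) → ZMod W} (hu : quotientOffsets k W n = u)
    (hb : ∀ i : Fin (k + 1), (𝓅 (n + i) : ZMod W) = b i) (i : Fin (k + 1)) :
    𝓅 (n + i) = W * (𝓅 n / W) + (W * (Fin.cons 0 u : Fin (k + 1) → ℕ) i + (b i).val) := by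
  have hcons : (Fin.cons 0 u : Fin (k + 1) → ℕ) i = 𝓅 (n + i) / W - 𝓅 n / W := by
    subst hu
    refine Fin.cases ?_ (fun j ↦ ?_) i
    · simp
    · rw [Fin.cons_succ, quotientOffsets, Fin.val_succ, add_assoc]
  have hmono : 𝓅 n / W ≤ 𝓅 (n + i) / W :=
    Nat.div_le_div_right (nth_prime_strictMono.monotone (Nat.le_add_right _ _))
  have : NeZero W := ⟨hW.ne'⟩
  rw [← hb i, ZMod.val_natCast, hcons, ← add_assoc, ← mul_add, Nat.add_sub_cancel' hmono,
    Nat.div_add_mod]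

lemma exists_unitsMap_lift {q m n : ℕ} (hqW : q ∣ W) (hW : W ≠ 0) (hn : W < 𝓅 n)
    {a : Fin m → (ZMod q)ˣ} (ha : ∀ i : Fin m, (𝓅 (n + i) : ZMod q) = a i) :
    ∃ b : Fin m → (ZMod W)ˣ, (∀ i, ZMod.unitsMap hqW (b i) = a i) ∧
      ∀ i : Fin m, (𝓅 (n + i) : ZMod W) = b i := by
  have hcop : ∀ i : Fin m, (𝓅 (n + i)).Coprime W := fun i ↦
    Nat.coprime_of_lt_prime hW
      (hn.trans_le (nth_prime_strictMono.monotone (Nat.le_add_right n i))) (Nat.prime_nth_prime _)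
  refine ⟨fun i ↦ ZMod.unitOfCoprime _ (hcop i), fun i ↦ Units.ext ?_,
    fun i ↦ (ZMod.coe_unitOfCoprime _ (hcop i)).symm⟩
  rw [ZMod.unitsMap_val, ZMod.coe_unitOfCoprime, ZMod.cast_natCast hqW, ha i]

namespace IsSieveScale

lemma card_residues_mul_factorial_le (h : IsSieveScale k w N W H Y x)
    (h𝒢 : ∀ n ∈ 𝒢, IsShortGap k H Y x n) (b : Fin (k + 1) → ZMod W) :
    (#{n ∈ 𝒢 | ∀ i : Fin (k + 1), (𝓅 (n + i) : ZMod W) = b i} : ℝ) * k.factorial ≤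
      10 * x * H ^ k / (W.totient * Real.log Y) ^ (k + 1) := by
  set ℱ := {n ∈ 𝒢 | ∀ i : Fin (k + 1), (𝓅 (n + i) : ZMod W) = b i}
  set 𝒰 := {u ∈ Fintype.piFinset fun _ : Fin k ↦ range (H / W + 1 + 1) | Monotone u}
  set B : ℝ := 5 * x * W ^ k / (W.totient * Real.log Y) ^ (k + 1)
  have hW : (0 : ℝ) < W := Nat.cast_pos.2 h.modulus_pos
  have : 0 ≤ B := by
    have : 0 ≤ Real.log Y := by positivity
    positivity
  have hmaps : ∀ n ∈ ℱ, quotientOffsets k W n ∈ 𝒰 := fun n hn ↦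
    mem_filter.2 ⟨Fintype.mem_piFinset.2 fun i ↦ mem_range.2 (Nat.lt_succ_of_le
      ((h𝒢 n (mem_filter.1 hn).1).quotientOffsets_le h.modulus_pos i)),
      quotientOffsets_monotone k W n⟩
  have hfibre : ∀ u ∈ 𝒰, (#{n ∈ ℱ | quotientOffsets k W n = u} : ℝ) ≤ B := fun u _ ↦ by
    refine le_trans (Nat.cast_le.2 (card_le_card fun n hn ↦ ?_)) (h.card_offsets_le h𝒢
      fun i ↦ W * (Fin.cons 0 u : Fin (k + 1) → ℕ) i + (b i).val)
    obtain ⟨hnℱ, hu⟩ := mem_filter.1 hn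
    obtain ⟨hn𝒢, hb⟩ := mem_filter.1 hnℱ
    exact mem_filter.2 ⟨hn𝒢, nth_prime_eq_of_quotientOffsets_eq h.modulus_pos hu hb⟩
  calc (#ℱ : ℝ) * k.factorial = (∑ u ∈ 𝒰, (#{n ∈ ℱ | quotientOffsets k W n = u} : ℝ)) *
        k.factorial := by rw [card_eq_sum_card_fiberwise hmaps, Nat.cast_sum]
    _ ≤ (∑ _u ∈ 𝒰, B) * k.factorial := by
        gcongr with u hu
        exact hfibre u hu
    _ = #𝒰 * k.factorial * B := by rw [sum_const, nsmul_eq_mul]; ring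
    _ ≤ (H / W + 1 + k).choose k * k.factorial * B := by
        gcongr
        exact card_monotone_le_choose k (H / W + 1)
    _ ≤ 2 * ((H : ℝ) / W) ^ k * B := by
        gcongr ?_ * B
        exact choose_mul_factorial_le h.modulus_pos h.modulus_le_gap
    _ = 10 * x * H ^ k / (W.totient * Real.log Y) ^ (k + 1) := by
        simp only [B, div_pow]
        field_simp
        ring

theorem card_mul_totient_pow_le (h : IsSieveScale k w N W H Y x)
    (h𝒢 : ∀ n ∈ 𝒢, IsShortGap k H Y x n) {q : ℕ} (hqW : q ∣ W)
    {𝒜 : Finset (Fin (k + 1) → (ZMod q)ˣ)}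
    (h𝒜 : ∀ n ∈ 𝒢, ∃ a ∈ 𝒜, ∀ i : Fin (k + 1), (𝓅 (n + i) : ZMod q) = a i) :
    #𝒢 * (q.totient : ℝ) ^ (k + 1) * (k.factorial * Real.log Y ^ (k + 1)) ≤
      #𝒜 * (10 * x * H ^ k) := by
  classical
  have : NeZero W := ⟨h.modulus_pos.ne'⟩
  have : NeZero q := ⟨(Nat.pos_of_dvd_of_pos hqW h.modulus_pos).ne'⟩
  have hφ : (0 : ℝ) < W.totient := Nat.cast_pos.2 (Nat.totient_pos.2 h.modulus_pos)
  have hlog : 0 < Real.log Y := Real.log_pos (by exact_mod_cast h.two_le)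
  set lift := (ZMod.unitsMap hqW).compLeft (Fin (k + 1))
  set ℬ : Finset (Fin (k + 1) → (ZMod W)ˣ) := {b | lift b ∈ 𝒜}
  have hlift : #ℬ * q.totient ^ (k + 1) = #𝒜 * W.totient ^ (k + 1) := by
    simpa [ZMod.card_units_eq_totient] using
      card_filter_map_mem_mul (f := lift) (ZMod.unitsMap_surjective hqW).comp_left 𝒜
  have hcover : 𝒢 ⊆ ℬ.biUnion fun b ↦ {n ∈ 𝒢 | ∀ i : Fin (k + 1), (𝓅 (n + i) : ZMod W) = b i} :=
    fun n hn ↦ by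
      obtain ⟨a, ha, hna⟩ := h𝒜 n hn
      obtain ⟨b, hba, hnb⟩ := exists_unitsMap_lift hqW h.modulus_pos.ne'
        (h.modulus_le_level.trans_lt (h𝒢 n hn).1) hna
      have hb : lift b ∈ 𝒜 := (funext hba : lift b = a) ▸ ha
      exact mem_biUnion.2 ⟨b, mem_filter.2 ⟨mem_univ b, hb⟩, mem_filter.2 ⟨hn, hnb⟩⟩
  have hcard : (#𝒢 : ℝ) * k.factorial ≤
      #ℬ * (10 * x * H ^ k / (W.totient * Real.log Y) ^ (k + 1)) :=
    calc (#𝒢 : ℝ) * k.factorial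
        ≤ (∑ b ∈ ℬ, #{n ∈ 𝒢 | ∀ i : Fin (k + 1), (𝓅 (n + i) : ZMod W) = b i} : ℕ) *
            k.factorial := by
          gcongr
          exact (card_le_card hcover).trans card_biUnion_le
      _ ≤ _ := by
          rw [Nat.cast_sum, sum_mul, ← nsmul_eq_mul]
          exact sum_le_card_nsmul _ _ _ fun b _ ↦
            h.card_residues_mul_factorial_le h𝒢 fun i ↦ (b i : ZMod W)
  calc #𝒢 * (q.totient : ℝ) ^ (k + 1) * (k.factorial * Real.log Y ^ (k + 1))
      = #𝒢 * k.factorial * (q.totient ^ (k + 1) * Real.log Y ^ (k + 1)) := by ring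
    _ ≤ #ℬ * (10 * x * H ^ k / (W.totient * Real.log Y) ^ (k + 1)) *
          (q.totient ^ (k + 1) * Real.log Y ^ (k + 1)) := by gcongr
    _ = (#ℬ * q.totient ^ (k + 1) : ℕ) * (10 * x * H ^ k) / W.totient ^ (k + 1) := by
        push_cast
        rw [mul_pow]
        field_simp
    _ = #𝒜 * (10 * x * H ^ k) := by
        rw [hlift]
        push_cast
        field_simp

end IsSieveScale

end ConsecutivePrimes

section ShortGaps

open Finset

lemma two_pow_le_mul_primeCounting {J : ℕ} (hJ : 1 ≤ J) :
    2 ^ J ≤ J * Nat.primeCounting (2 ^ J) + J + 1 := by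
  have hlog2 : 0 < Real.log 2 := Real.log_pos one_lt_two
  have : (0 : ℝ) < J := Nat.cast_pos.2 hJ
  have hlog : Real.log ((2 ^ J : ℕ) + 1) ≤ (J + 1) * Real.log 2 := by
    rw [← Nat.cast_succ J, ← Real.log_pow, pow_succ]
    gcongr
    push_cast
    linarith [one_le_pow₀ (one_le_two (α := ℝ)) (n := J)]
  have hpi := Chebyshev.pi_ge (2 ^ J)
  rw [Nat.cast_pow, Nat.cast_ofNat, Real.log_pow, div_le_iff₀ (by positivity)] at hpi
  rw [Nat.cast_pow, Nat.cast_ofNat] at hlog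
  have hmul : (2 : ℝ) ^ J * Real.log 2 ≤
      (J * Nat.primeCounting (2 ^ J) + J + 1) * Real.log 2 := by linarith
  exact_mod_cast le_of_mul_le_mul_right hmul hlog2

lemma nth_prime_le_of_lt_primeCounting {n x : ℕ} (hn : n < Nat.primeCounting x) : 𝓅 n ≤ x :=
  Nat.le_of_lt_succ (Nat.nth_lt_of_lt_count hn)

lemma card_large_gaps_mul_le {a : ℕ → ℕ} (ha : Monotone a) {N k x : ℕ}
    (hx : ∀ n < N + k, a n ≤ x) (h : ℕ) :
    #{n ∈ range N | a n + h < a (n + k)} * h ≤ k * x := by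
  have hgap : ∑ n ∈ range N, a n + #{n ∈ range N | a n + h < a (n + k)} * h ≤
      ∑ n ∈ range N, a (n + k) := by
    rw [← smul_eq_mul, ← sum_const, sum_filter, ← sum_add_distrib]
    refine sum_le_sum fun n _ ↦ ?_
    have : a n ≤ a (n + k) := ha (Nat.le_add_right n k)
    split_ifs <;> lia
  have htelescope : ∑ n ∈ range k, a n + ∑ n ∈ range N, a (n + k) =
      ∑ n ∈ range N, a n + ∑ i ∈ range k, a (N + i) := by
    simp_rw [add_comm _ k]
    rw [← sum_range_add, add_comm k N, sum_range_add]
  have htail : ∑ i ∈ range k, a (N + i) ≤ k * x :=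
    (sum_le_card_nsmul _ _ x fun i hi ↦
      hx _ (Nat.add_lt_add_left (mem_range.1 hi) N)).trans_eq (by simp)
  lia

theorem exists_many_isShortGap {k J D : ℕ} (hk : 1 ≤ k) (hJ : 1 ≤ J)
    (hbig : 2 * (J * (k + D + 2)) ≤ 2 ^ J) :
    ∃ 𝒢 : Finset ℕ, (∀ n ∈ 𝒢, D ≤ n ∧ IsShortGap k (4 * k * J) D (2 ^ J) n) ∧
      2 ^ J ≤ 4 * (J * #𝒢) := by
  set x := 2 ^ J
  set N := Nat.primeCounting x - k
  set 𝒢 := {n ∈ Ico D N | ¬ 𝓅 n + 4 * k * J < 𝓅 (n + k)}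
  set large := {n ∈ range N | 𝓅 n + 4 * k * J < 𝓅 (n + k)}
  have hcheb : x ≤ J * Nat.primeCounting x + J + 1 := two_pow_le_mul_primeCounting hJ
  have hlarge : 4 * (J * #large) ≤ x := by
    rcases le_total (Nat.primeCounting x) k with hle | hle
    · have : large = ∅ := by simp [large, N, hle]
      simp [this]
    · have hmul : #large * (4 * k * J) ≤ k * x :=
        card_large_gaps_mul_le nth_prime_strictMono.monotone
          (fun n hn ↦ nth_prime_le_of_lt_primeCounting (by lia)) _
      exact Nat.le_of_mul_le_mul_left (by linarith) hk
  have hcover : Nat.primeCounting x ≤ #𝒢 + #large + k + D := by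
    have hsub : Ico D N ⊆ 𝒢 ∪ large := fun n hn ↦ by
      simp only [𝒢, large, mem_union, mem_filter, mem_range, (mem_Ico.1 hn).2, hn, true_and]
      exact (em _).symm
    have hcard := (card_le_card hsub).trans (card_union_le _ _)
    rw [Nat.card_Ico] at hcard
    lia
  refine ⟨𝒢, fun n hn ↦ ?_, ?_⟩
  · obtain ⟨hnIco, hgap⟩ := mem_filter.1 hn
    obtain ⟨hDn, hnN⟩ := mem_Ico.1 hnIco
    exact ⟨hDn, by linarith [Nat.add_two_le_nth_prime n],
      nth_prime_le_of_lt_primeCounting (by lia), not_lt.1 hgap⟩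
  · have := Nat.mul_le_mul_left J hcover
    linarith

end ShortGaps

section Patterns

open Finset

lemma sq_le_two_pow {n : ℕ} (hn : 4 ≤ n) : n ^ 2 ≤ 2 ^ n := by
  induction n, hn using Nat.le_induction with
  | base => norm_num
  | succ n hn ih =>
    rw [pow_succ 2 n]
    nlinarith

lemma log_two_pow_le (j : ℕ) : Real.log (2 ^ j : ℕ) ≤ j := by
  rw [Nat.cast_pow, Nat.cast_ofNat, Real.log_pow]
  exact mul_le_of_le_one_right j.cast_nonneg (by linarith [Real.log_two_lt_d9])

lemma le_log_two_pow (j : ℕ) : 2 / 3 * (j : ℝ) ≤ Real.log (2 ^ j : ℕ) := by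
  rw [Nat.cast_pow, Nat.cast_ofNat, Real.log_pow, mul_comm]
  gcongr
  linarith [Real.log_two_gt_d9]

lemma mul_log_pow_mul_pow_le_two_pow {k j W : ℕ} (hj : 4 ≤ j) (hW : W ≤ j) :
    W * Real.log (2 ^ j : ℕ) ^ (k + 1) * (((2 ^ j : ℕ) : ℝ) ^ (k + 1)) ^ 4 ≤
      (2 ^ (5 * (k + 1) * j) : ℕ) := by
  have hj1 : (1 : ℝ) ≤ j := Nat.one_le_cast.2 (by lia)
  have hsq : (j : ℝ) ^ 2 ≤ (2 ^ j : ℕ) := by exact_mod_cast sq_le_two_pow hj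
  calc W * Real.log (2 ^ j : ℕ) ^ (k + 1) * (((2 ^ j : ℕ) : ℝ) ^ (k + 1)) ^ 4
      ≤ j * j ^ (k + 1) * (((2 ^ j : ℕ) : ℝ) ^ (k + 1)) ^ 4 := by
        gcongr
        exact log_two_pow_le j
    _ ≤ j ^ (k + 1) * j ^ (k + 1) * (((2 ^ j : ℕ) : ℝ) ^ (k + 1)) ^ 4 := by
        gcongr
        exact le_self_pow₀ hj1 k.succ_ne_zero
    _ = ((j : ℝ) ^ 2) ^ (k + 1) * (((2 ^ j : ℕ) : ℝ) ^ (k + 1)) ^ 4 := by ring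
    _ ≤ ((2 ^ j : ℕ) : ℝ) ^ (k + 1) * (((2 ^ j : ℕ) : ℝ) ^ (k + 1)) ^ 4 := by gcongr
    _ = (2 ^ (5 * (k + 1) * j) : ℕ) := by
        push_cast
        ring

lemma gap_pow_le_pow {k w N : ℕ} (hw : w = 2 * (N * (k + 1)))
    (hN : 2 ^ (16 * (k + 1) ^ 3) ≤ N) (hNk : 20 * k * (k + 1) ≤ N) :
    (20 * k * (k + 1) * 16 ^ w) ^ ((k + 1) * (k + 1) - (k + 1)) ≤ w ^ N := by
  have hNw : N ≤ w := by nlinarith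
  have hlin : 20 * k * (k + 1) ≤ 16 ^ w :=
    (hNk.trans hNw).trans (Nat.lt_pow_self (by norm_num)).le
  calc (20 * k * (k + 1) * 16 ^ w) ^ ((k + 1) * (k + 1) - (k + 1))
      ≤ (16 ^ w * 16 ^ w) ^ ((k + 1) * (k + 1) - (k + 1)) := by gcongr
    _ ≤ (16 ^ w * 16 ^ w) ^ ((k + 1) * (k + 1)) :=
        Nat.pow_le_pow_right (by positivity) (Nat.sub_le _ _)
    _ = 2 ^ (8 * w * ((k + 1) * (k + 1))) := by
        rw [← mul_pow, show 16 * 16 = 2 ^ 8 by norm_num, ← pow_mul, ← pow_mul, mul_assoc]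
    _ = (2 ^ (16 * (k + 1) ^ 3)) ^ N := by
        rw [← pow_mul, hw]
        ring_nf
    _ ≤ w ^ N := by
        gcongr
        exact hN.trans hNw

/-- The scales are `w ≪ j = 16 ^ w ≪ Y = 2 ^ j` and `x = Y ^ (5 * (k + 1))`, so that the gap `H` is
a bounded multiple of `log x`. -/
theorem exists_isSieveScale (k : ℕ) {q : ℕ} (hq : 0 < q) (D : ℕ) :
    ∃ w N W j, IsSieveScale k w N W (20 * k * (k + 1) * j) (2 ^ j) (2 ^ (5 * (k + 1) * j)) ∧
      q ∣ W ∧ D ≤ j := by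
  obtain ⟨N, hN⟩ : ∃ N, N = 2 ^ (16 * (k + 1) ^ 3) + 20 * k * (k + 1) + q + D := ⟨_, rfl⟩
  obtain ⟨w, hw⟩ : ∃ w, w = 2 * (N * (k + 1)) := ⟨_, rfl⟩
  have hNpow : 2 ^ (16 * (k + 1) ^ 3) ≤ N := by lia
  have hNw : 2 * N ≤ w := by nlinarith
  have hN1 : 1 ≤ N := by lia
  have hkw : k + 1 ≤ w := by nlinarith
  have hwj : w < 16 ^ w := Nat.lt_pow_self (by norm_num)
  have hj : 4 ≤ 16 ^ w := le_trans (by norm_num) (Nat.le_self_pow (by lia) 16)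
  have hjY : 16 ^ w < 2 ^ 16 ^ w := Nat.lt_pow_self one_lt_two
  have hWj : q * primorial w ≤ 16 ^ w :=
    calc q * primorial w ≤ 4 ^ w * 4 ^ w := Nat.mul_le_mul
          ((by lia : q ≤ w).trans (Nat.lt_pow_self (by norm_num)).le) (primorial_le_four_pow w)
      _ = 16 ^ w := by rw [← mul_pow, show 4 * 4 = 16 by norm_num]
  refine ⟨w, N, q * primorial w, 16 ^ w, ?_, dvd_mul_right _ _, by lia⟩
  exact
    { card_le := hkw
      one_lt := by lia
      smooth := fun p hp hpw ↦ (hp.dvd_primorial_iff.2 hpw).mul_left q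
      gap_pow_le := gap_pow_le_pow hw hNpow (by lia)
      two_mul_le := hw.ge
      modulus_pos := Nat.mul_pos hq (primorial_pos w)
      modulus_le_gap := Nat.mul_le_mul_left _ hWj
      two_le := Nat.le_self_pow (by lia) 2
      modulus_le_level := hWj.trans hjY.le
      level_le := Nat.pow_le_pow_right two_pos (Nat.le_mul_of_pos_left _ (by positivity))
      error_le := mul_log_pow_mul_pow_le_two_pow hj hWj }

theorem exists_many_isShortGap_two_pow {k j : ℕ} (hk : 1 ≤ k) (hj : 20 * (k + 1) ≤ j) :
    ∃ 𝒢 : Finset ℕ, (∀ n ∈ 𝒢, 2 ^ j ≤ n ∧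
        IsShortGap k (20 * k * (k + 1) * j) (2 ^ j) (2 ^ (5 * (k + 1) * j)) n) ∧
      2 ^ (5 * (k + 1) * j) ≤ 20 * (k + 1) * j * #𝒢 := by
  set Y := 2 ^ j
  set J := 5 * (k + 1) * j
  have hjY : j < Y := Nat.lt_two_pow_self
  have hbig : 2 * (J * (k + Y + 2)) ≤ 2 ^ J :=
    calc 2 * (J * (k + Y + 2)) ≤ 2 * (J * (2 * Y)) := by gcongr; lia
      _ = 20 * (k + 1) * j * Y := by ring
      _ ≤ Y * Y * Y := by gcongr; lia
      _ = 2 ^ (3 * j) := by ring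
      _ ≤ 2 ^ J := Nat.pow_le_pow_right two_pos (Nat.mul_le_mul_right j (by lia))
  obtain ⟨𝒢, h𝒢, hcard⟩ :=
    exists_many_isShortGap (D := Y) hk (Nat.mul_pos (by lia) (by lia)) hbig
  have hgap : 4 * k * J = 20 * k * (k + 1) * j := by ring
  exact ⟨𝒢, hgap ▸ h𝒢, hcard.trans_eq (by ring)⟩

theorem totient_pow_mul_factorial_le {k q : ℕ} (hk : 1 ≤ k) (hq : 0 < q)
    {𝒜 : Finset (Fin (k + 1) → (ZMod q)ˣ)}
    (h𝒜 : ∀ᶠ n in atTop, ∃ a ∈ 𝒜, ∀ i : Fin (k + 1), (𝓅 (n + i) : ZMod q) = a i) :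
    (q.totient : ℝ) ^ (k + 1) * k.factorial ≤
      #𝒜 * (300 * (k + 1) * (30 * k * (k + 1)) ^ k) := by
  obtain ⟨n₀, hn₀⟩ := eventually_atTop.1 h𝒜
  obtain ⟨w, N, W, j, hscale, hqW, hDj⟩ := exists_isSieveScale k hq (n₀ + 20 * (k + 1))
  obtain ⟨𝒢, h𝒢, hcard⟩ := exists_many_isShortGap_two_pow hk (by lia : 20 * (k + 1) ≤ j)
  have hmain := hscale.card_mul_totient_pow_le (fun n hn ↦ (h𝒢 n hn).2) hqW
    (fun n hn ↦ hn₀ n (by linarith [(h𝒢 n hn).1, Nat.lt_two_pow_self (n := j)]))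
  set x := 2 ^ (5 * (k + 1) * j)
  have hcardR : (x : ℝ) ≤ 20 * (k + 1) * j * #𝒢 := by exact_mod_cast hcard
  have hH : ((20 * k * (k + 1) * j : ℕ) : ℝ) = 30 * k * (k + 1) * (2 / 3 * j) := by
    push_cast
    ring
  set Φ : ℝ := q.totient ^ (k + 1) * k.factorial
  have hjR : (0 : ℝ) < j := Nat.cast_pos.2 (by lia)
  have hx : (0 : ℝ) < x := by positivity
  have hcomp : Φ * x * (2 / 3 * (j : ℝ)) ^ (k + 1) ≤
      #𝒜 * (300 * (k + 1) * (30 * k * (k + 1)) ^ k) * x * (2 / 3 * (j : ℝ)) ^ (k + 1) :=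
    calc Φ * x * (2 / 3 * (j : ℝ)) ^ (k + 1)
        ≤ Φ * (20 * (k + 1) * j * #𝒢) * Real.log (2 ^ j : ℕ) ^ (k + 1) := by
          gcongr
          exact le_log_two_pow j
      _ = 20 * (k + 1) * j *
            (#𝒢 * q.totient ^ (k + 1) * (k.factorial * Real.log (2 ^ j : ℕ) ^ (k + 1))) := by ring
      _ ≤ 20 * (k + 1) * j * (#𝒜 * (10 * x * (20 * k * (k + 1) * j : ℕ) ^ k)) := by
          gcongr
      _ = #𝒜 * (300 * (k + 1) * (30 * k * (k + 1)) ^ k) * x *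
            (2 / 3 * (j : ℝ)) ^ (k + 1) := by
          rw [hH, mul_pow, pow_succ (2 / 3 * (j : ℝ))]
          ring
  exact le_of_mul_le_mul_right (le_of_mul_le_mul_right hcomp (by positivity)) hx

end Patterns

section Recurrence

theorem tendsto_consecCount_of_infinite {q m : ℕ} {a : Fin m → (ZMod q)ˣ}
    (h : {n : ℕ | ∀ i : Fin m, (𝓅 (n + i) : ZMod q) = a i}.Infinite) :
    Tendsto (consecCount q m a) atTop atTop := by
  have hfin (x : ℝ) :
      {n : ℕ | (𝓅 n : ℝ) ≤ x ∧ ∀ i : Fin m, (𝓅 (n + i) : ZMod q) = a i}.Finite := by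
    refine (Set.finite_Iic ⌊x⌋₊).subset fun n hn ↦ Nat.le_floor (le_trans ?_ hn.1)
    exact_mod_cast nth_prime_strictMono.le_apply
  refine tendsto_atTop.2 fun N ↦ ?_
  obtain ⟨t, ht, rfl⟩ := h.exists_subset_card_eq N
  filter_upwards [eventually_ge_atTop ((∑ n ∈ t, 𝓅 n : ℕ) : ℝ)] with x hx
  rw [consecCount, ← Set.ncard_coe_finset]
  refine Set.ncard_le_ncard (fun n hn ↦ ⟨le_trans ?_ hx, ht hn⟩) (hfin x)
  exact_mod_cast Finset.single_le_sum_of_canonicallyOrdered hn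

lemma eventually_exists_units_eq_nth_prime {q : ℕ} (hq : 0 < q) (m : ℕ) :
    ∀ᶠ n in atTop, ∃ a : Fin m → (ZMod q)ˣ, ∀ i : Fin m, (𝓅 (n + i) : ZMod q) = a i := by
  filter_upwards [eventually_ge_atTop q] with n hn
  have hcop (i : Fin m) : (𝓅 (n + i)).Coprime q :=
    Nat.coprime_of_lt_prime hq.ne' (by linarith [Nat.add_two_le_nth_prime (n + i)])
      (Nat.prime_nth_prime _)
  exact ⟨fun i ↦ ZMod.unitOfCoprime _ (hcop i), fun i ↦ rfl⟩

theorem eventually_exists_tendsto_consecCount {q : ℕ} (hq : 0 < q) (m : ℕ) :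
    ∀ᶠ n in atTop, ∃ a : Fin m → (ZMod q)ˣ, Tendsto (consecCount q m a) atTop atTop ∧
      ∀ i : Fin m, (𝓅 (n + i) : ZMod q) = a i := by
  have : NeZero q := ⟨hq.ne'⟩
  have hrare (a : Fin m → (ZMod q)ˣ) (ha : ¬Tendsto (consecCount q m a) atTop atTop) :
      ∀ᶠ n in atTop, ¬∀ i : Fin m, (𝓅 (n + i) : ZMod q) = a i := by
    refine not_frequently.1 fun hfreq ↦ ha (tendsto_consecCount_of_infinite ?_)
    exact Nat.frequently_atTop_iff_infinite.1 hfreq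
  filter_upwards [eventually_exists_units_eq_nth_prime hq m,
    eventually_all.2 fun a ↦ eventually_imp_distrib_left.2 (hrare a)] with n ⟨a, ha⟩ hn
  exact ⟨a, not_not.1 fun hna ↦ hn a hna ha, ha⟩

theorem totient_pow_mul_factorial_le_ncard {q m k : ℕ} (hq : 0 < q) (hk : 1 ≤ k)
    (hkm : k + 1 ≤ m) :
    (q.totient : ℝ) ^ (k + 1) * k.factorial ≤
      {a : Fin m → (ZMod q)ˣ | Tendsto (consecCount q m a) atTop atTop}.ncard *
        (300 * (k + 1) * (30 * k * (k + 1)) ^ k) := by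
  classical
  have : NeZero q := ⟨hq.ne'⟩
  let restrict (a : Fin m → (ZMod q)ˣ) (i : Fin (k + 1)) : (ZMod q)ˣ := a (Fin.castLE hkm i)
  let 𝒮 : Finset (Fin m → (ZMod q)ˣ) := {a | Tendsto (consecCount q m a) atTop atTop}
  have hcard : {a : Fin m → (ZMod q)ˣ | Tendsto (consecCount q m a) atTop atTop}.ncard =
      𝒮.card := by
    rw [← Set.ncard_coe_finset, Finset.coe_filter_univ]
  have hevent : ∀ᶠ n in atTop, ∃ a ∈ 𝒮.image restrict,
      ∀ i : Fin (k + 1), (𝓅 (n + i) : ZMod q) = a i := by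
    filter_upwards [eventually_exists_tendsto_consecCount hq m] with n ⟨a, ha, hna⟩
    exact ⟨restrict a, Finset.mem_image_of_mem _ (by simpa [𝒮] using ha),
      fun i ↦ hna (Fin.castLE hkm i)⟩
  rw [hcard]
  refine (totient_pow_mul_factorial_le hk hq hevent).trans ?_
  gcongr
  exact Finset.card_image_le

end Recurrence

section Constants

lemma factorial_succ_le_two_mul_pow {k : ℕ} (hk : k ≠ 0) : (k + 1).factorial ≤ 2 * k ^ k := by
  have hfact : k.factorial ≤ k ^ (k - 1) := by
    have hdesc := Nat.factorial_mul_descFactorial (k.sub_le 1)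
    rw [Nat.sub_sub_self (Nat.one_le_iff_ne_zero.2 hk), Nat.factorial_one, one_mul] at hdesc
    exact hdesc ▸ Nat.descFactorial_le_pow k (k - 1)
  calc (k + 1).factorial = (k + 1) * k.factorial := Nat.factorial_succ k
    _ ≤ 2 * k * k ^ (k - 1) := Nat.mul_le_mul (by lia) hfact
    _ = 2 * k ^ k := by rw [mul_assoc, mul_pow_sub_one hk]

lemma eight_pow_le {k : ℕ} (hk : 2 ≤ k) : 8 ^ k ≤ 3 * k ^ (k + 8) := by
  rcases le_or_gt 8 k with h | h
  · calc 8 ^ k ≤ k ^ k := Nat.pow_le_pow_left h k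
      _ ≤ k ^ (k + 8) := Nat.pow_le_pow_right (by lia) (by lia)
      _ ≤ 3 * k ^ (k + 8) := by lia
  · interval_cases k <;> norm_num

lemma mul_factorial_mul_le_Mval_pow {m k : ℕ} (hk : k ≠ 0) :
    2 * 8 ^ k * (k : ℝ) ^ (2 * k + 2) * m ^ (k + 1) ≤
      (Mval m (k + 1) : ℝ) ^ k * (k + 1).factorial := by
  have hpred : ((k + 1 : ℕ) : ℝ) - 1 = k := by simp
  set B : ℝ := 2 ^ (3 * k + 1) * k ^ (2 * k + 1) / (k + 1).factorial with hB
  set E : ℝ := m * k + (k + 1 : ℕ) with hE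
  have hM : B ^ (k⁻¹ : ℝ) * m * E ^ (k⁻¹ : ℝ) ≤ Mval m (k + 1) := by
    rw [Mval, hpred, one_div, show 3 * (k + 1) - 2 = 3 * k + 1 by lia,
      show 2 * (k + 1) - 1 = 2 * k + 1 by lia]
    exact Nat.le_ceil _
  have hMpow : B * m ^ k * E ≤ (Mval m (k + 1) : ℝ) ^ k := by
    refine le_of_eq_of_le ?_ (pow_le_pow_left₀ (by positivity) hM k)
    rw [mul_pow, mul_pow, Real.rpow_inv_natCast_pow (by positivity) hk,
      Real.rpow_inv_natCast_pow (by positivity) hk]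
  have hBfact : B * (k + 1).factorial = 2 * 8 ^ k * k ^ (2 * k + 1) := by
    rw [hB, div_mul_cancel₀ _ (by positivity), pow_succ, pow_mul]
    norm_num [mul_comm]
  calc 2 * 8 ^ k * (k : ℝ) ^ (2 * k + 2) * m ^ (k + 1)
      = 2 * 8 ^ k * (k : ℝ) ^ (2 * k + 1) * m ^ k * (m * k) := by ring
    _ ≤ B * (k + 1).factorial * m ^ k * E := by
        rw [hBfact, hE]
        gcongr
        exact le_add_of_nonneg_right (by positivity)
    _ = B * m ^ k * E * (k + 1).factorial := by ring
    _ ≤ (Mval m (k + 1) : ℝ) ^ k * (k + 1).factorial := by gcongr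

lemma Mval_mul_le_Kval_mul {m k : ℕ} {c : ℝ} (hm : 1 ≤ m) (hc0 : 0 ≤ c) (hc1 : c ≤ 1)
    (hK : Kval m (k + 1) c ≠ 0) :
    Mval m (k + 1) * k ≤ Kval m (k + 1) c * m := by
  set fl := ⌊c * ((m : ℝ) - 1) / (((k + 1 : ℕ) : ℝ) - 1)⌋₊ with hfl
  have hfl_pos : 0 < (fl : ℝ) := by
    refine Nat.cast_pos.2 (Nat.pos_of_ne_zero fun hfl0 ↦ hK ?_)
    rw [Kval, ← hfl, hfl0, Nat.cast_zero, div_zero, Nat.ceil_zero]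
  have hfl_le : (fl : ℝ) * k ≤ m := by
    have hmR : 0 ≤ (m : ℝ) - 1 := sub_nonneg.2 (Nat.one_le_cast.2 hm)
    have hle : (fl : ℝ) ≤ c * (m - 1) / k := by
      have hpred : ((k + 1 : ℕ) : ℝ) - 1 = k := by simp
      rw [hfl, hpred]
      exact Nat.floor_le (by positivity)
    calc (fl : ℝ) * k ≤ c * (m - 1) := mul_le_of_le_div₀ (by positivity) k.cast_nonneg hle
      _ ≤ m := by linarith [mul_le_of_le_one_left hmR hc1]
  have hMK : (Mval m (k + 1) : ℝ) ≤ Kval m (k + 1) c * fl := (div_le_iff₀ hfl_pos).1 (Nat.le_ceil _)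
  have hgoal : (Mval m (k + 1) : ℝ) * k ≤ Kval m (k + 1) c * m :=
    calc (Mval m (k + 1) : ℝ) * k ≤ Kval m (k + 1) c * fl * k := by gcongr
      _ = Kval m (k + 1) c * (fl * k) := mul_assoc _ _ _
      _ ≤ Kval m (k + 1) c * m := by gcongr
  exact_mod_cast hgoal

lemma le_Kval_pow_mul_factorial {m k : ℕ} {c : ℝ} (hk : k ≠ 0) (hm : 1 ≤ m) (hc0 : 0 ≤ c)
    (hc1 : c ≤ 1) (hK : Kval m (k + 1) c ≠ 0) :
    2 * m * (8 ^ k * k ^ (3 * k + 2)) ≤ Kval m (k + 1) c ^ k * (k + 1).factorial := by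
  have hMval : 2 * 8 ^ k * k ^ (2 * k + 2) * m ^ (k + 1) ≤
      Mval m (k + 1) ^ k * (k + 1).factorial := by
    exact_mod_cast mul_factorial_mul_le_Mval_pow hk
  refine Nat.le_of_mul_le_mul_right ?_ (pow_pos hm k)
  calc 2 * m * (8 ^ k * k ^ (3 * k + 2)) * m ^ k
      = 2 * 8 ^ k * k ^ (2 * k + 2) * m ^ (k + 1) * k ^ k := by ring
    _ ≤ Mval m (k + 1) ^ k * (k + 1).factorial * k ^ k := by gcongr
    _ = (Mval m (k + 1) * k) ^ k * (k + 1).factorial := by ring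
    _ ≤ (Kval m (k + 1) c * m) ^ k * (k + 1).factorial := by
        gcongr ?_ ^ k * _
        exact Mval_mul_le_Kval_mul hm hc0 hc1 hK
    _ = Kval m (k + 1) c ^ k * (k + 1).factorial * m ^ k := by ring

section LargeK

variable {m k K : ℕ}

lemma mul_pow_le_of_le_pow_mul_factorial (hk : k ≠ 0)
    (hK : 2 * m * (8 ^ k * k ^ (3 * k + 2)) ≤ K ^ k * (k + 1).factorial) :
    m * (8 * k ^ 2) ^ k ≤ K ^ k := by
  refine Nat.le_of_mul_le_mul_left (c := 2 * k ^ k) ?_ (by positivity)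
  calc 2 * k ^ k * (m * (8 * k ^ 2) ^ k) = 2 * m * (8 ^ k * k ^ (3 * k)) := by ring
    _ ≤ 2 * m * (8 ^ k * k ^ (3 * k + 2)) := by gcongr <;> lia
    _ ≤ K ^ k * (k + 1).factorial := hK
    _ ≤ K ^ k * (2 * k ^ k) := by gcongr; exact factorial_succ_le_two_mul_pow hk
    _ = 2 * k ^ k * K ^ k := by ring

lemma mul_eight_pow_le (hk : k ≠ 0) (hm : 2 ≤ m) (hK : m * (8 * k ^ 2) ^ k ≤ K ^ k) :
    1200 * 8 ^ k ≤ k ^ k * K ^ 4 := by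
  obtain rfl | hk2 : k = 1 ∨ 2 ≤ k := by lia
  · have hK16 : 16 ≤ K := by lia
    calc 1200 * 8 ^ 1 ≤ 1 ^ 1 * 16 ^ 4 := by norm_num
      _ ≤ 1 ^ 1 * K ^ 4 := by gcongr
  · have h8 : 8 * k ^ 2 ≤ K :=
      (Nat.pow_le_pow_iff_left hk).1 ((Nat.le_mul_of_pos_left _ (by lia)).trans hK)
    calc 1200 * 8 ^ k ≤ 1200 * (3 * k ^ (k + 8)) := by gcongr; exact eight_pow_le hk2
      _ ≤ 4096 * k ^ (k + 8) := by lia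
      _ = k ^ k * (8 * k ^ 2) ^ 4 := by ring
      _ ≤ k ^ k * K ^ 4 := by gcongr

lemma two_mul_mul_le_pow_mul_factorial (hk : k ≠ 0) (hm : 2 ≤ m)
    (hK : 2 * m * (8 ^ k * k ^ (3 * k + 2)) ≤ K ^ k * (k + 1).factorial) :
    2 * m * (300 * (k + 1) * (30 * k * (k + 1)) ^ k) ≤ K ^ (k + 4) * k.factorial := by
  have hK4 : 1200 * 8 ^ k ≤ k ^ k * K ^ 4 :=
    mul_eight_pow_le hk hm (mul_pow_le_of_le_pow_mul_factorial hk hK)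
  refine Nat.le_of_mul_le_mul_left (c := (k + 1).factorial) ?_ (Nat.factorial_pos _)
  calc (k + 1).factorial * (2 * m * (300 * (k + 1) * (30 * k * (k + 1)) ^ k))
      = 2 * m * k.factorial * (300 * (k + 1) ^ 2 * (30 * k * (k + 1)) ^ k) := by
        rw [Nat.factorial_succ]
        ring
    _ ≤ 2 * m * k.factorial * (300 * (2 * k) ^ 2 * (32 * k * (2 * k)) ^ k) := by
        gcongr <;> lia
    _ = 2 * m * k.factorial * (300 * (2 * k) ^ 2 * (8 * 8 * k ^ 2) ^ k) := by
        rw [show 32 * k * (2 * k) = 8 * 8 * k ^ 2 by ring]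
    _ = 2 * m * k.factorial * (8 ^ k * k ^ (2 * k + 2)) * (1200 * 8 ^ k) := by
        rw [mul_pow (8 * 8), mul_pow 8]
        ring
    _ ≤ 2 * m * k.factorial * (8 ^ k * k ^ (2 * k + 2)) * (k ^ k * K ^ 4) := by gcongr
    _ = 2 * m * (8 ^ k * k ^ (3 * k + 2)) * (K ^ 4 * k.factorial) := by ring
    _ ≤ K ^ k * (k + 1).factorial * (K ^ 4 * k.factorial) := by gcongr
    _ = (k + 1).factorial * (K ^ (k + 4) * k.factorial) := by ring

end LargeK

end Constants

theorem stmt5_general {m r : ℕ} (hr : 2 ≤ r) (hrm : r ≤ m) {c : ℝ} (hc0 : 0 < c) (hc1 : c ≤ 1)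
    {q : ℕ} (hq : 0 < q) (hφ : Kval m r c ≤ q.totient) :
    2 * (m : ℝ) * ((Kval m r c : ℝ) ^ 5)⁻¹ * (q.totient : ℝ) ^ 2 ≤
      {a : Fin m → (ZMod q)ˣ | Tendsto (consecCount q m a) atTop atTop}.ncard := by
  obtain ⟨k, rfl⟩ : ∃ k, r = k + 1 + 1 := ⟨r - 2, by lia⟩
  have hpatterns := totient_pow_mul_factorial_le_ncard hq (Nat.le_add_left 1 k) hrm
  set K := Kval m (k + 1 + 1) c
  set n := {a : Fin m → (ZMod q)ˣ | Tendsto (consecCount q m a) atTop atTop}.ncard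
  rcases eq_or_ne K 0 with hK0 | hK0
  · simp [hK0]
  set C : ℝ := 300 * ((k + 1 : ℕ) + 1) * (30 * (k + 1 : ℕ) * ((k + 1 : ℕ) + 1)) ^ (k + 1)
  have hC : 2 * m * C ≤ (K : ℝ) ^ (k + 1 + 4) * (k + 1).factorial := by
    have hK := le_Kval_pow_mul_factorial k.succ_ne_zero (by lia) hc0.le hc1 hK0
    simp only [C]
    exact_mod_cast two_mul_mul_le_pow_mul_factorial k.succ_ne_zero (by lia) hK
  rw [mul_right_comm, ← div_eq_mul_inv, div_le_iff₀ (by positivity)]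
  refine le_of_mul_le_mul_right ?_ (by positivity : 0 < C)
  calc 2 * m * (q.totient : ℝ) ^ 2 * C = 2 * m * C * (q.totient : ℝ) ^ 2 := by ring
    _ ≤ (K : ℝ) ^ (k + 1 + 4) * (k + 1).factorial * (q.totient : ℝ) ^ 2 := by gcongr
    _ = (K : ℝ) ^ 5 * ((K : ℝ) ^ k * (q.totient : ℝ) ^ 2 * (k + 1).factorial) := by ring
    _ ≤ (K : ℝ) ^ 5 * ((q.totient : ℝ) ^ k * (q.totient : ℝ) ^ 2 * (k + 1).factorial) := by gcongr
    _ = (K : ℝ) ^ 5 * ((q.totient : ℝ) ^ (k + 1 + 1) * (k + 1).factorial) := by ring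
    _ ≤ (K : ℝ) ^ 5 * (n * C) := by gcongr
    _ = n * (K : ℝ) ^ 5 * C := by ring

theorem stmt5 (m r : ℕ) (hr : 2 ≤ r) (hrm : 100 * r ≤ m) (c : ℝ) (hc0 : 0 < c) (hc1 : c < 1)
    (q : ℕ) (hq : 0 < q) (hsq : Squarefree q) (hφ : Kval m r c ≤ q.totient) :
    2 * (1 - c) * (m : ℝ) * ((Kval m r c : ℝ) ^ 5)⁻¹ *
        ((q.totient : ℝ) * ((q.totient : ℝ) - 1)) ≤
      ({a : Fin m → (ZMod q)ˣ | Tendsto (consecCount q m a) atTop atTop}.ncard : ℝ) := by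
  refine le_trans ?_ (stmt5_general hr (by lia) hc0 hc1.le hq hφ)
  have hφ1 : (0 : ℝ) ≤ q.totient - 1 := sub_nonneg.2 (Nat.one_le_cast.2 (Nat.totient_pos.2 hq))
  rw [sq]
  gcongr <;> linarith
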